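/- Assume h satisfies the control condition: there exist K, γ₀ > 0 such that |d·h'(c·d)| ≤ K(h(d)+1) for all d > 0 and all c with |c−1| ≤ γ₀. Let r be a minimizer of Î over 𝒜_λ. Then r ∈ C¹((0,1]), r'(R) > 0 for all R ∈ (0,1], the map R ↦ R^{n−1} Φ̂_{,1}(r(R)) is C¹ on (0,1], and r satisfies the modified equilibrium equation (d/dR)[R^{n−1} Φ̂_{,1}(r(R))] = (n−1) R^{n−2} Φ̂_{,2}(r(R)) on (0,1). Moreover, if r(0) > 0, then the modified radial Cauchy stress satisfies lim_{R→0⁺} T̂(r(R)) = 0. -/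

import Mathlib

open Real MeasureTheory Filter Set
open scoped ENNReal NNReal

noncomputable section

/-- Radial stored energy `Φ(q, v, …, v) = (κ/n)(qⁿ + (n−1)vⁿ) + h(q v^{n−1})`,
the restriction of `Φ(v₁,…,vₙ) = (κ/n)(v₁ⁿ+⋯+vₙⁿ) + h(v₁⋯vₙ)` to points
`(q, v, …, v)`. -/
def Phi (n : ℕ) (κ : ℝ) (h : ℝ → ℝ) (q v : ℝ) : ℝ :=
  (κ / n) * (q ^ n + ((n : ℝ) - 1) * v ^ n) + h (q * v ^ (n - 1))

/-- `Φ_{,1}(q, v, …, v) = κ q^{n−1} + v^{n−1} h'(q v^{n−1})`. -/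
def Phi1 (n : ℕ) (κ : ℝ) (h' : ℝ → ℝ) (q v : ℝ) : ℝ :=
  κ * q ^ (n - 1) + v ^ (n - 1) * h' (q * v ^ (n - 1))

/-- `Φ_{,2}(q, v, …, v) = κ v^{n−1} + q v^{n−2} h'(q v^{n−1})`. -/
def Phi2 (n : ℕ) (κ : ℝ) (h' : ℝ → ℝ) (q v : ℝ) : ℝ :=
  κ * v ^ (n - 1) + q * v ^ (n - 2) * h' (q * v ^ (n - 1))

/-- Radial Cauchy stress `T(q,v) = v^{1−n} Φ_{,1}(q,v,…,v) = κ(q/v)^{n−1} + h'(q v^{n−1})`. -/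
def Tstress (n : ℕ) (κ : ℝ) (h' : ℝ → ℝ) (q v : ℝ) : ℝ :=
  κ * (q / v) ^ (n - 1) + h' (q * v ^ (n - 1))

/-- The determinant function `δ(R) = r'(R) (r(R)/R)^{n−1}`. -/
def del (n : ℕ) (r r' : ℝ → ℝ) (R : ℝ) : ℝ :=
  r' R * (r R / R) ^ (n - 1)

/-- Hypotheses on `h : (0,∞) → [0,∞)`: it is `C²` with derivative `h'` and second
derivative `h''`, `h'' > 0`, `h(d) → ∞` as `d → 0⁺`, `h(d)/d → ∞` as `d → ∞`,
`h'(d) → −∞` as `d → 0⁺` and `h'(d) → ∞` as `d → ∞`. -/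
structure GoodH (h h' h'' : ℝ → ℝ) : Prop where
  nonneg : ∀ d : ℝ, 0 < d → 0 ≤ h d
  deriv1 : ∀ d : ℝ, 0 < d → HasDerivAt h (h' d) d
  deriv2 : ∀ d : ℝ, 0 < d → HasDerivAt h' (h'' d) d
  cont2 : ContinuousOn h'' (Set.Ioi 0)
  hpp_pos : ∀ d : ℝ, 0 < d → 0 < h'' d
  lim_zero : Tendsto h (nhdsWithin 0 (Set.Ioi 0)) atTop
  lim_growth : Tendsto (fun d => h d / d) atTop atTop
  dlim_zero : Tendsto h' (nhdsWithin 0 (Set.Ioi 0)) atBot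
  dlim_top : Tendsto h' atTop atTop

/-- `r ∈ C²((0,1])`, with `r, r' > 0` on `(0,1]`, solving the radial equilibrium
equation `(d/dR)[R^{n−1} Φ_{,1}(r(R))] = (n−1) R^{n−2} Φ_{,2}(r(R))`. -/
structure RadialSol (n : ℕ) (κ : ℝ) (h' : ℝ → ℝ) (r r' r'' : ℝ → ℝ) : Prop where
  pos : ∀ R ∈ Set.Ioc (0:ℝ) 1, 0 < r R
  derivPos : ∀ R ∈ Set.Ioc (0:ℝ) 1, 0 < r' R
  hasDeriv : ∀ R ∈ Set.Ioc (0:ℝ) 1, HasDerivWithinAt r (r' R) (Set.Ioc 0 1) R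
  hasDeriv2 : ∀ R ∈ Set.Ioc (0:ℝ) 1, HasDerivWithinAt r' (r'' R) (Set.Ioc 0 1) R
  cont2 : ContinuousOn r'' (Set.Ioc 0 1)
  equil : ∀ R ∈ Set.Ioc (0:ℝ) 1,
    HasDerivWithinAt (fun s => s ^ (n - 1) * Phi1 n κ h' (r' s) (r s / s))
      (((n : ℝ) - 1) * R ^ (n - 2) * Phi2 n κ h' (r' R) (r R / R)) (Set.Ioc 0 1) R


/-- Modified radial stored energy
`Φ̂(q,v,…,v) = (κ/n)qⁿ + h(q v^{n−1}) + κ q v^{n−1}((n−1)/n + ln(v^{n−1}))`. -/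
def PhiHat (n : ℕ) (κ : ℝ) (h : ℝ → ℝ) (q v : ℝ) : ℝ :=
  (κ / n) * q ^ n + h (q * v ^ (n - 1)) +
    κ * (q * v ^ (n - 1)) * (((n : ℝ) - 1) / n + ((n : ℝ) - 1) * Real.log v)

/-- `Φ̂_{,1}(q,v,…,v) = κ q^{n−1} + v^{n−1} h'(q v^{n−1}) + κ v^{n−1}((n−1)/n + (n−1) ln v)`. -/
def PhiHat1 (n : ℕ) (κ : ℝ) (h' : ℝ → ℝ) (q v : ℝ) : ℝ :=
  κ * q ^ (n - 1) + v ^ (n - 1) * h' (q * v ^ (n - 1)) +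
    κ * v ^ (n - 1) * (((n : ℝ) - 1) / n + ((n : ℝ) - 1) * Real.log v)

/-- `Φ̂_{,2}(q,v,…,v) = q v^{n−2}(h'(q v^{n−1}) + κ + κ(n−1)(1/n + ln v))`. -/
def PhiHat2 (n : ℕ) (κ : ℝ) (h' : ℝ → ℝ) (q v : ℝ) : ℝ :=
  q * v ^ (n - 2) *
    (h' (q * v ^ (n - 1)) + κ + κ * (((n : ℝ) - 1) * (1 / n + Real.log v)))

/-- Modified radial Cauchy stress
`T̂(q,v) = κ(q/v)^{n−1} + h'(q v^{n−1}) + (n−1)κ(1/n + ln v)`. -/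
def THat (n : ℕ) (κ : ℝ) (h' : ℝ → ℝ) (q v : ℝ) : ℝ :=
  κ * (q / v) ^ (n - 1) + h' (q * v ^ (n - 1)) +
    ((n : ℝ) - 1) * κ * (1 / n + Real.log v)

/-- `r ∈ C²((0,1])`, with `r, r' > 0` on `(0,1]`, solving the modified radial
equilibrium equation `(d/dR)[R^{n−1} Φ̂_{,1}(r(R))] = (n−1) R^{n−2} Φ̂_{,2}(r(R))`. -/
structure ModRadialSol (n : ℕ) (κ : ℝ) (h' : ℝ → ℝ) (r r' r'' : ℝ → ℝ) : Prop where
  pos : ∀ R ∈ Set.Ioc (0:ℝ) 1, 0 < r R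
  derivPos : ∀ R ∈ Set.Ioc (0:ℝ) 1, 0 < r' R
  hasDeriv : ∀ R ∈ Set.Ioc (0:ℝ) 1, HasDerivWithinAt r (r' R) (Set.Ioc 0 1) R
  hasDeriv2 : ∀ R ∈ Set.Ioc (0:ℝ) 1, HasDerivWithinAt r' (r'' R) (Set.Ioc 0 1) R
  cont2 : ContinuousOn r'' (Set.Ioc 0 1)
  equil : ∀ R ∈ Set.Ioc (0:ℝ) 1,
    HasDerivWithinAt (fun s => s ^ (n - 1) * PhiHat1 n κ h' (r' s) (r s / s))
      (((n : ℝ) - 1) * R ^ (n - 2) * PhiHat2 n κ h' (r' R) (r R / R)) (Set.Ioc 0 1) R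


/-- The admissible set `𝒜_λ`: `r ∈ W^{1,1}(0,1)` (absolutely continuous with
integrable derivative `r'`), `r(1) = λ`, `r' > 0` a.e. in `(0,1)` and `r(0) ≥ 0`. -/
structure Adm (lam : ℝ) (r r' : ℝ → ℝ) : Prop where
  intg : IntegrableOn r' (Set.Ioc 0 1)
  ftc : ∀ R ∈ Set.Icc (0:ℝ) 1, r R = r 0 + ∫ t in Set.Ioc 0 R, r' t
  derivPos : ∀ᵐ R ∂(volume.restrict (Set.Ioc (0:ℝ) 1)), 0 < r' R
  bc : r 1 = lam
  c0 : 0 ≤ r 0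

/-- The modified energy functional `Î`, valued in `EReal` (it is the integral of
`R^{n−1} Φ̂(r'(R), r(R)/R, …, r(R)/R)` minus `(κ(n−1)/n) λⁿ ln λ`, the integral being
defined as the difference of the lower integrals of the positive and negative parts). -/
def IHatE (n : ℕ) (κ lam : ℝ) (h : ℝ → ℝ) (r r' : ℝ → ℝ) : EReal :=
  (((∫⁻ R in Set.Ioc (0:ℝ) 1,
      ENNReal.ofReal (R ^ (n - 1) * PhiHat n κ h (r' R) (r R / R))) : ℝ≥0∞) : EReal)
  - (((∫⁻ R in Set.Ioc (0:ℝ) 1,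
      ENNReal.ofReal (-(R ^ (n - 1) * PhiHat n κ h (r' R) (r R / R)))) : ℝ≥0∞) : EReal)
  - ((κ * ((n : ℝ) - 1) / n * lam ^ n * Real.log lam : ℝ) : EReal)

/-- A nonnegative quantity that controls the modified stored energy and its logarithmic
derivatives. -/
def energyControl (n : ℕ) (h : ℝ → ℝ) (q v : ℝ) : ℝ :=
  q ^ n + (h (q * v ^ (n - 1)) + 1) + q * v ^ (n - 1) + q * v ^ (n - 1) * |log v|

theorem hasDerivAt_PhiHat_comp {n : ℕ} (hn : 2 ≤ n) (κ : ℝ) {h h' : ℝ → ℝ}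
    (hd : ∀ d : ℝ, 0 < d → HasDerivAt h (h' d) d) {x y : ℝ → ℝ} {a b t : ℝ}
    (hx : HasDerivAt x a t) (hy : HasDerivAt y b t) (hxt : 0 < x t) (hyt : 0 < y t) :
    HasDerivAt (fun s => PhiHat n κ h (x s) (y s))
      (PhiHat1 n κ h' (x t) (y t) * a + ((n : ℝ) - 1) * PhiHat2 n κ h' (x t) (y t) * b) t := by
  obtain ⟨m, rfl⟩ := Nat.exists_eq_add_of_le' hn
  have hprod : HasDerivAt (fun s => x s * y s ^ (m + 1))
      (a * y t ^ (m + 1) + x t * (((m : ℝ) + 1) * y t ^ m * b)) t := by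
    have := hx.fun_mul (hy.fun_pow (m + 1))
    simpa using this
  have hcomp := (hd (x t * y t ^ (m + 1)) (by positivity)).comp t hprod
  have hlog := hy.log hyt.ne'
  have := (((hx.pow (m + 2)).const_mul (κ / ((m + 2 : ℕ) : ℝ))).add hcomp).add
    ((hprod.const_mul κ).mul ((hlog.const_mul (((m + 2 : ℕ) : ℝ) - 1)).const_add
      ((((m + 2 : ℕ) : ℝ) - 1) / ((m + 2 : ℕ) : ℝ))))
  refine HasDerivAt.congr_deriv (this.congr_of_eventuallyEq (Eventually.of_forall fun s => ?_)) ?_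
  · simp [PhiHat]
  · have hm : ((m : ℝ) + 2) ≠ 0 := by positivity
    simp only [PhiHat1, PhiHat2, Nat.add_sub_cancel, show m + 2 - 1 = m + 1 from rfl]
    push_cast
    field_simp
    ring

section Bounds

variable {n : ℕ} {κ K γ₀ : ℝ} {h h' : ℝ → ℝ} {q v x y : ℝ}

theorem abs_log_le_one_of_mem (hy : 1 / 2 ≤ y) (hy' : y ≤ 2) : |log y| ≤ 1 := by
  have hy0 : 0 < y := by linarith
  rw [abs_le]
  refine ⟨?_, by linarith [log_le_sub_one_of_pos hy0]⟩
  have h1 := log_le_sub_one_of_pos (inv_pos.2 hy0)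
  rw [log_inv] at h1
  have : y⁻¹ ≤ 2 := by
    rw [inv_le_comm₀ hy0 two_pos]; linarith
  linarith

theorem abs_PhiHat1_mul_le (hn : 2 ≤ n) (hκ : 0 < κ) (hK : 0 < K)
    (hpos : ∀ d : ℝ, 0 < d → 0 ≤ h d)
    (hctrl : ∀ d : ℝ, 0 < d → ∀ c : ℝ, |c - 1| ≤ γ₀ → |d * h' (c * d)| ≤ K * (h d + 1))
    (hq : 0 < q) (hv : 0 < v) (hx : 1 / 2 ≤ x) (hx' : x ≤ 2) (hy : 1 / 2 ≤ y) (hy' : y ≤ 2)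
    (hc : |x * y ^ (n - 1) - 1| ≤ γ₀) :
    |PhiHat1 n κ h' (q * x) (v * y) * q| ≤ 2 ^ n * (K + κ * (3 * n)) * energyControl n h q v := by
  obtain ⟨m, rfl⟩ := Nat.exists_eq_add_of_le' hn
  simp only [show m + 2 - 1 = m + 1 from rfl] at hc ⊢
  have hx0 : 0 < x := by linarith
  have hy0 : 0 < y := by linarith
  set d := q * v ^ (m + 1) with hd
  have hd0 : 0 < d := by positivity
  have hD := hctrl d hd0 _ hc
  have hh0 := hpos d hd0
  have hl := abs_log_le_one_of_mem hy hy'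
  set A : ℝ := 2 ^ (m + 2) with hA
  have hxp : x ^ (m + 1) ≤ A := by
    calc x ^ (m + 1) ≤ 2 ^ (m + 1) := by gcongr
      _ ≤ A := by rw [hA]; gcongr <;> norm_num
  have hyp : y ^ (m + 1) ≤ A := by
    calc y ^ (m + 1) ≤ 2 ^ (m + 1) := by gcongr
      _ ≤ A := by rw [hA]; gcongr <;> norm_num
  have hfrac : ((m : ℝ) + 1) / (m + 2) ≤ 1 := by
    rw [div_le_one (by positivity)]; linarith
  have hfrac0 : 0 ≤ ((m : ℝ) + 1) / (m + 2) := by positivity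
  have key : PhiHat1 (m + 2) κ h' (q * x) (v * y) * q
      = κ * (x ^ (m + 1) * q ^ (m + 2)) + y ^ (m + 1) * (d * h' (x * y ^ (m + 1) * d))
        + κ * (y ^ (m + 1) * (d * (((m : ℝ) + 1) / (m + 2)
          + ((m : ℝ) + 1) * (log v + log y)))) := by
    have e : q * x * (v * y) ^ (m + 1) = x * y ^ (m + 1) * d := by rw [hd]; ring
    simp only [PhiHat1, show m + 2 - 1 = m + 1 from rfl, e, log_mul hv.ne' hy0.ne']
    push_cast
    rw [show ((m : ℝ) + 2 - 1) = m + 1 by ring, hd]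
    ring
  have hbr : |((m : ℝ) + 1) / (m + 2) + ((m : ℝ) + 1) * (log v + log y)|
      ≤ 1 + ((m : ℝ) + 1) * (|log v| + 1) := by
    refine (abs_add_le _ _).trans ?_
    rw [abs_of_nonneg hfrac0, abs_mul, abs_of_nonneg (by positivity : (0 : ℝ) ≤ (m : ℝ) + 1)]
    gcongr
    exact (abs_add_le _ _).trans (by gcongr)
  rw [key]
  have hE : energyControl (m + 2) h q v = q ^ (m + 2) + (h d + 1) + d + d * |log v| := rfl
  rw [hE]
  calc _ ≤ κ * (A * q ^ (m + 2)) + A * (K * (h d + 1))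
        + κ * (A * (d * (1 + ((m : ℝ) + 1) * (|log v| + 1)))) := by
        refine (abs_add_le _ _).trans (add_le_add ((abs_add_le _ _).trans (add_le_add ?_ ?_)) ?_)
        · rw [abs_of_nonneg (by positivity)]; gcongr
        · rw [abs_mul, abs_of_nonneg (by positivity)]; gcongr
        · rw [abs_mul, abs_mul, abs_mul, abs_of_pos hκ, abs_of_pos hd0,
            abs_of_pos (by positivity : 0 < y ^ (m + 1))]
          gcongr
    _ ≤ _ := by
        have hA0 : 0 < A := by positivity
        have hm0 : (0 : ℝ) ≤ m := m.cast_nonneg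
        have hL : 0 ≤ d * |log v| := by positivity
        have hQ : 0 ≤ q ^ (m + 2) := by positivity
        push_cast
        rw [← sub_nonneg]
        have : A * (K + κ * (3 * ((m : ℝ) + 2))) * (q ^ (m + 2) + (h d + 1) + d + d * |log v|)
          - (κ * (A * q ^ (m + 2)) + A * (K * (h d + 1))
            + κ * (A * (d * (1 + ((m : ℝ) + 1) * (|log v| + 1)))))
          = A * ((K + κ * (3 * (m : ℝ) + 5)) * q ^ (m + 2) + κ * (3 * ((m : ℝ) + 2)) * (h d + 1)
            + (K + κ * (2 * m + 4)) * d + (K + κ * (2 * m + 5)) * (d * |log v|)) := by ring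
        rw [this]
        positivity

theorem abs_PhiHat2_mul_le (hn : 2 ≤ n) (hκ : 0 < κ) (hK : 0 < K)
    (hpos : ∀ d : ℝ, 0 < d → 0 ≤ h d)
    (hctrl : ∀ d : ℝ, 0 < d → ∀ c : ℝ, |c - 1| ≤ γ₀ → |d * h' (c * d)| ≤ K * (h d + 1))
    (hq : 0 < q) (hv : 0 < v) (hx : 1 / 2 ≤ x) (hx' : x ≤ 2) (hy : 1 / 2 ≤ y) (hy' : y ≤ 2)
    (hc : |x * y ^ (n - 1) - 1| ≤ γ₀) :
    |PhiHat2 n κ h' (q * x) (v * y) * v| ≤ 2 ^ n * (K + κ * (3 * n)) * energyControl n h q v := by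
  obtain ⟨m, rfl⟩ := Nat.exists_eq_add_of_le' hn
  simp only [show m + 2 - 1 = m + 1 from rfl] at hc ⊢
  have hx0 : 0 < x := by linarith
  have hy0 : 0 < y := by linarith
  set d := q * v ^ (m + 1) with hd
  have hd0 : 0 < d := by positivity
  have hD := hctrl d hd0 _ hc
  have hh0 := hpos d hd0
  have hl := abs_log_le_one_of_mem hy hy'
  set A : ℝ := 2 ^ (m + 2) with hA
  have hxy : x * y ^ m ≤ A := by
    calc x * y ^ m ≤ 2 * 2 ^ m := by gcongr
      _ = 2 ^ (m + 1) := by ring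
      _ ≤ A := by rw [hA]; gcongr <;> norm_num
  have hxy0 : 0 < x * y ^ m := by positivity
  have hfrac : 1 / ((m : ℝ) + 2) ≤ 1 := by
    rw [div_le_one (by positivity)]; linarith [(Nat.cast_nonneg m : (0 : ℝ) ≤ m)]
  have hfrac0 : 0 ≤ 1 / ((m : ℝ) + 2) := by positivity
  have key : PhiHat2 (m + 2) κ h' (q * x) (v * y) * v
      = x * y ^ m * (d * h' (x * y ^ (m + 1) * d))
        + κ * (x * y ^ m * (d * (1 + ((m : ℝ) + 1) * (1 / (m + 2) + (log v + log y))))) := by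
    have e : q * x * (v * y) ^ (m + 1) = x * y ^ (m + 1) * d := by rw [hd]; ring
    simp only [PhiHat2, show m + 2 - 1 = m + 1 from rfl, Nat.add_sub_cancel, e,
      log_mul hv.ne' hy0.ne']
    push_cast
    rw [show ((m : ℝ) + 2 - 1) = m + 1 by ring, hd]
    ring
  have hbr : |1 + ((m : ℝ) + 1) * (1 / (m + 2) + (log v + log y))|
      ≤ 1 + ((m : ℝ) + 1) * (1 + (|log v| + 1)) := by
    refine (abs_add_le _ _).trans ?_
    rw [abs_one, abs_mul, abs_of_nonneg (by positivity : (0 : ℝ) ≤ (m : ℝ) + 1)]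
    gcongr
    refine (abs_add_le _ _).trans ?_
    rw [abs_of_nonneg hfrac0]
    gcongr
    exact (abs_add_le _ _).trans (by gcongr)
  rw [key]
  have hE : energyControl (m + 2) h q v = q ^ (m + 2) + (h d + 1) + d + d * |log v| := rfl
  rw [hE]
  calc _ ≤ A * (K * (h d + 1))
        + κ * (A * (d * (1 + ((m : ℝ) + 1) * (1 + (|log v| + 1))))) := by
        refine (abs_add_le _ _).trans (add_le_add ?_ ?_)
        · rw [abs_mul, abs_of_nonneg (by positivity)]; gcongr
        · rw [abs_mul, abs_mul, abs_mul d, abs_of_pos hκ, abs_of_pos hd0, abs_of_pos hxy0]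
          gcongr
    _ ≤ _ := by
        have hA0 : 0 < A := by positivity
        have hm0 : (0 : ℝ) ≤ m := m.cast_nonneg
        have hL : 0 ≤ d * |log v| := by positivity
        have hQ : 0 ≤ q ^ (m + 2) := by positivity
        push_cast
        rw [← sub_nonneg]
        have : A * (K + κ * (3 * ((m : ℝ) + 2))) * (q ^ (m + 2) + (h d + 1) + d + d * |log v|)
          - (A * (K * (h d + 1))
            + κ * (A * (d * (1 + ((m : ℝ) + 1) * (1 + (|log v| + 1))))))
          = A * ((K + κ * (3 * (m : ℝ) + 6)) * q ^ (m + 2) + κ * (3 * ((m : ℝ) + 2)) * (h d + 1)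
            + (K + κ * (m + 3)) * d + (K + κ * (2 * m + 5)) * (d * |log v|)) := by ring
        rw [this]
        positivity

theorem energyControl_pos (hpos : ∀ d : ℝ, 0 < d → 0 ≤ h d) (hq : 0 < q) (hv : 0 < v) :
    0 < energyControl n h q v := by
  have := hpos (q * v ^ (n - 1)) (by positivity)
  unfold energyControl
  positivity

/-- Coercivity of the weighted modified energy density along maps bounded by `lam`. -/
theorem weighted_energyControl_le (hn : 2 ≤ n) (hκ : 0 < κ) {lam : ℝ} (hlam : 0 < lam)
    (hpos : ∀ d : ℝ, 0 < d → 0 ≤ h d) :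
    ∃ C > 0, ∃ C' > 0, ∀ R q u : ℝ, 0 < R → R ≤ 1 → 0 < q → 0 < u → u ≤ lam →
      R ^ (n - 1) * energyControl n h q (u / R)
        ≤ C * (R ^ (n - 1) * PhiHat n κ h q (u / R)) + C' * (q + 1) := by
  obtain ⟨m, rfl⟩ := Nat.exists_eq_add_of_le' hn
  set C : ℝ := (m + 2) / κ + 1 + 1 / κ with hC
  refine ⟨C, by positivity, 1 + lam ^ (m + 1) + 2 * κ * (m + 1) * C * lam ^ m, by positivity,
    fun R q u hR hR1 hq hu hul => ?_⟩
  have hv : 0 < u / R := by positivity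
  simp only [energyControl, PhiHat, show m + 2 - 1 = m + 1 from rfl]
  set d := q * (u / R) ^ (m + 1) with hd
  have hd0 : 0 < d := by positivity
  have hh0 := hpos d hd0
  have hRd : R ^ (m + 1) * d = q * u ^ (m + 1) := by rw [hd, div_pow]; field_simp
  have hw1 : R ^ (m + 1) * d ≤ lam ^ (m + 1) * q := by
    rw [hRd, mul_comm]; gcongr
  have hlogneg : |log (u / R)| ≤ log (u / R) + 2 * (1 / u) := by
    have h1 : -log (u / R) ≤ 1 / u := by
      rw [log_div hu.ne' hR.ne']
      have := log_nonpos hR.le hR1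
      have h2 := log_le_sub_one_of_pos (inv_pos.2 hu)
      rw [log_inv] at h2
      rw [one_div]; linarith
    have : 0 < 1 / u := by positivity
    rcases abs_cases (log (u / R)) with ⟨h, _⟩ | ⟨h, _⟩ <;> linarith
  have hw2 : R ^ (m + 1) * (d * (1 / u)) ≤ lam ^ m * q := by
    have : R ^ (m + 1) * (d * (1 / u)) = u ^ m * q := by
      rw [← mul_assoc, hRd]; field_simp; ring
    rw [this]; gcongr
  have hRp : R ^ (m + 1) ≤ 1 := pow_le_one₀ hR.le hR1
  have hRp0 : 0 < R ^ (m + 1) := by positivity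
  set W := R ^ (m + 1)
  set L := log (u / R)
  have hN : (0 : ℝ) < (m : ℝ) + 1 := by positivity
  have hstep : q ^ (m + 2) + h d + d * |L|
      ≤ C * (κ / (m + 2) * q ^ (m + 2) + h d + κ * ((m : ℝ) + 1) * (d * |L|)) := by
    have e1 : 1 ≤ C * (κ / (m + 2)) := by
      rw [hC]
      have : ((m : ℝ) + 2) / κ * (κ / (m + 2)) = 1 := by field_simp
      have h2 : 0 ≤ (1 + 1 / κ) * (κ / ((m : ℝ) + 2)) := by positivity
      nlinarith
    have e2 : 1 ≤ C := by
      rw [hC]; have : 0 ≤ ((m : ℝ) + 2) / κ := by positivity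
      have : 0 ≤ 1 / κ := by positivity
      linarith
    have e3 : 1 ≤ C * (κ * (m + 1)) := by
      rw [hC]
      have : 1 / κ * (κ * ((m : ℝ) + 1)) = m + 1 := by field_simp
      have h2 : 0 ≤ (((m : ℝ) + 2) / κ + 1) * (κ * (m + 1)) := by positivity
      have : (0 : ℝ) ≤ m := m.cast_nonneg
      nlinarith
    have a1 : 0 < q ^ (m + 2) := by positivity
    have a3 : 0 ≤ d * |L| := by positivity
    nlinarith [mul_le_mul_of_nonneg_right e1 a1.le, mul_le_mul_of_nonneg_right e2 hh0,
      mul_le_mul_of_nonneg_right e3 a3]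
  have hC0 : 0 < C := by positivity
  have hPhi : κ / (m + 2) * q ^ (m + 2) + h d + κ * ((m : ℝ) + 1) * (d * |L|)
      ≤ (κ / ((m + 2 : ℕ) : ℝ) * q ^ (m + 2) + h d
        + κ * d * ((((m + 2 : ℕ) : ℝ) - 1) / ((m + 2 : ℕ) : ℝ)
          + (((m + 2 : ℕ) : ℝ) - 1) * L)) + 2 * κ * (m + 1) * (d * (1 / u)) := by
    push_cast
    have e : 0 ≤ κ * d * (((m : ℝ) + 2 - 1) / (m + 2)) := by
      rw [show ((m : ℝ) + 2 - 1) = m + 1 by ring]; positivity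
    have := mul_le_mul_of_nonneg_left hlogneg (by positivity : 0 ≤ κ * (m + 1) * d)
    nlinarith
  set Φ := (κ / ((m + 2 : ℕ) : ℝ) * q ^ (m + 2) + h d
        + κ * d * ((((m + 2 : ℕ) : ℝ) - 1) / ((m + 2 : ℕ) : ℝ)
          + (((m + 2 : ℕ) : ℝ) - 1) * L))
  have t1 := mul_le_mul_of_nonneg_left (hstep.trans (mul_le_mul_of_nonneg_left hPhi hC0.le)) hRp0.le
  have t2 := mul_le_mul_of_nonneg_left hw2 (by positivity : 0 ≤ 2 * κ * (m + 1) * C)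
  have t3 : 0 ≤ lam ^ (m + 1) + 2 * κ * (m + 1) * C * lam ^ m := by positivity
  nlinarith

end Bounds

theorem aemeasurable_comp_of_continuousOn_Ioi {f g : ℝ → ℝ} {μ : Measure ℝ}
    (hf : ContinuousOn f (Ioi 0)) (hg : AEMeasurable g μ) (hpos : ∀ᵐ x ∂μ, 0 < g x) :
    AEMeasurable (fun x => f (g x)) μ := by
  classical
  have hm : Measurable ((Ioi (0 : ℝ)).piecewise f 0) :=
    hf.measurable_piecewise continuousOn_const measurableSet_Ioi
  refine (hm.comp_aemeasurable hg).congr ?_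
  filter_upwards [hpos] with x hx
  simp [hx]

/-- Integration by parts for primitives, as a change of the order of integration. -/
theorem setIntegral_mul_primitive_eq {Q η : ℝ → ℝ} {a b : ℝ} (hQ : IntegrableOn Q (Ioc a b))
    (hη : IntegrableOn η (Ioc a b)) :
    ∫ R in Ioc a b, Q R * ∫ t in Ioc a R, η t = ∫ t in Ioc a b, η t * ∫ R in Ioc t b, Q R := by
  have h_int : Integrable (Function.uncurry fun R t => (Ici t).indicator (fun R => Q R * η t) R)
      ((volume.restrict (Ioc a b)).prod (volume.restrict (Ioc a b))) := by
    have h1 := Integrable.mul_prod hQ hη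
    have hS : MeasurableSet {z : ℝ × ℝ | z.2 ≤ z.1} :=
      measurableSet_le measurable_snd measurable_fst
    refine (h1.indicator hS).congr (Eventually.of_forall fun z => ?_)
    simp [Function.uncurry, indicator]
  have hswap := integral_integral_swap h_int
  have hl : ∫ R in Ioc a b, Q R * ∫ t in Ioc a R, η t
      = ∫ R in Ioc a b, ∫ t in Ioc a b, (Ici t).indicator (fun R => Q R * η t) R := by
    refine setIntegral_congr_fun measurableSet_Ioc fun R hR => ?_
    have hset : Ioc a b ∩ Iic R = Ioc a R := by
      ext t; simp only [mem_inter_iff, mem_Ioc, mem_Iic]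
      exact ⟨fun ⟨⟨h1, _⟩, h2⟩ => ⟨h1, h2⟩, fun ⟨h1, h2⟩ => ⟨⟨h1, h2.trans hR.2⟩, h2⟩⟩
    have : ∀ t, (Ici t).indicator (fun R => Q R * η t) R
        = (Iic R).indicator (fun t => Q R * η t) t := fun t => by
      simp [indicator]
    simp only [this]
    rw [setIntegral_indicator measurableSet_Iic, hset, integral_const_mul]
  have hr : ∫ t in Ioc a b, η t * ∫ R in Ioc t b, Q R
      = ∫ t in Ioc a b, ∫ R in Ioc a b, (Ici t).indicator (fun R => Q R * η t) R := by
    refine setIntegral_congr_fun measurableSet_Ioc fun t ht => ?_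
    have hset : Ioc a b ∩ Ici t = Icc t b := by
      ext R; simp only [mem_inter_iff, mem_Ioc, mem_Ici, mem_Icc]
      exact ⟨fun ⟨⟨_, h1⟩, h2⟩ => ⟨h2, h1⟩, fun ⟨h1, h2⟩ => ⟨⟨ht.1.trans_le h1, h2⟩, h1⟩⟩
    rw [setIntegral_indicator measurableSet_Ici, hset, integral_Icc_eq_integral_Ioc,
      integral_mul_const, mul_comm]
  rw [hl, hr, hswap]

theorem setIntegral_Ioc_add_Ioc {Q : ℝ → ℝ} {a b t : ℝ} (hQ : IntegrableOn Q (Ioc a b))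
    (ht : t ∈ Icc a b) :
    ∫ R in Ioc a b, Q R = (∫ R in Ioc a t, Q R) + ∫ R in Ioc t b, Q R := by
  have hu := setIntegral_union (μ := volume) (f := Q) (Ioc_disjoint_Ioc_of_le (le_refl t)
    : Disjoint (Ioc a t) (Ioc t b)) measurableSet_Ioc
    (hQ.mono_set (Ioc_subset_Ioc_right ht.2)) (hQ.mono_set (Ioc_subset_Ioc_left ht.1))
  rwa [Ioc_union_Ioc_eq_Ioc ht.1 ht.2] at hu

theorem continuousOn_tail_integral {Q : ℝ → ℝ} {a b : ℝ} (hQ : IntegrableOn Q (Ioc a b)) :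
    ContinuousOn (fun t => ∫ R in Ioc t b, Q R) (Icc a b) := by
  have := intervalIntegral.continuousOn_primitive
    ((integrableOn_Icc_iff_integrableOn_Ioc enorm_ne_top).2 hQ)
  refine ((continuousOn_const (c := ∫ R in Ioc a b, Q R)).sub this).congr fun t ht => ?_
  simp only [setIntegral_Ioc_add_Ioc hQ ht, Pi.sub_apply, add_sub_cancel_left]

section DuBoisReymond

variable {r q P Q : ℝ → ℝ}

/-- The weak Euler–Lagrange identity, tested against all perturbations `φ` of `r` (with
derivative `η`) that are dominated by `r` and whose derivative is dominated by `q`. -/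
def WeakStationary (r q P Q : ℝ → ℝ) : Prop :=
  ∀ (η φ : ℝ → ℝ) (M : ℝ), Measurable η → (∀ R, |η R| ≤ M * q R) →
    (∀ R ∈ Icc (0 : ℝ) 1, φ R = φ 0 + ∫ t in Ioc 0 R, η t) → φ 1 = 0 →
    (∀ R ∈ Icc (0 : ℝ) 1, |φ R| ≤ M * r R) →
    ∫ R in Ioc (0 : ℝ) 1, (P R * η R + Q R * φ R) = 0

theorem integrableOn_of_mul_mono (hrpos : ∀ R ∈ Ioc (0 : ℝ) 1, 0 < r R)
    (hmono : MonotoneOn r (Icc 0 1)) (hQm : AEMeasurable Q (volume.restrict (Ioc 0 1)))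
    (hQr : IntegrableOn (fun R => Q R * r R) (Ioc 0 1)) {a : ℝ} (ha0 : 0 ≤ a) (ha1 : a ≤ 1)
    (hra : 0 < r a) : IntegrableOn Q (Ioc a 1) := by
  have hsub : Ioc a 1 ⊆ Ioc 0 1 := Ioc_subset_Ioc_left ha0
  have h1 : IntegrableOn (fun R => (r a)⁻¹ * (Q R * r R)) (Ioc a 1) :=
    (hQr.mono_set hsub).const_mul _
  refine Integrable.mono h1
    (hQm.mono_measure (Measure.restrict_mono hsub le_rfl)).aestronglyMeasurable ?_
  filter_upwards [ae_restrict_mem measurableSet_Ioc] with R hR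
  have hRr := hrpos R (hsub hR)
  have hle : r a ≤ r R := hmono ⟨ha0, ha1⟩ ⟨ha0.trans hR.1.le, hR.2⟩ hR.1.le
  rw [norm_mul, norm_mul, Real.norm_eq_abs (r a)⁻¹, Real.norm_eq_abs (r R), abs_of_pos hRr,
    abs_of_pos (inv_pos.2 hra)]
  have : 1 ≤ (r a)⁻¹ * r R := by
    rw [inv_mul_eq_div, one_le_div hra]; exact hle
  nlinarith [norm_nonneg (Q R)]

theorem integrableOn_mul_of_dominated {A η q : ℝ → ℝ} {M : ℝ} {s : Set ℝ} (hs : MeasurableSet s)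
    (hA : AEMeasurable A (volume.restrict s)) (hη : AEMeasurable η (volume.restrict s))
    (hAq : IntegrableOn (fun R => A R * q R) s) (hq : ∀ R ∈ s, 0 < q R)
    (hle : ∀ R ∈ s, |η R| ≤ M * q R) : IntegrableOn (fun R => A R * η R) s := by
  refine Integrable.mono (hAq.const_mul M) (hA.mul hη).aestronglyMeasurable ?_
  filter_upwards [ae_restrict_mem hs] with R hR
  rw [norm_mul, norm_mul, norm_mul, Real.norm_eq_abs (η R), Real.norm_eq_abs (q R),
    abs_of_pos (hq R hR)]
  calc ‖A R‖ * |η R| ≤ ‖A R‖ * (M * q R) := by gcongr; exact hle R hR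
    _ ≤ ‖A R‖ * (‖M‖ * q R) := by
      have := hq R hR
      gcongr; exact le_abs_self M
    _ = _ := by ring

theorem abs_setIntegral_Ioc_le {η : ℝ → ℝ} {B R : ℝ} (hB : ∀ R, |η R| ≤ B)
    (hR : R ∈ Icc (0 : ℝ) 1) : |∫ t in Ioc 0 R, η t| ≤ B := by
  have hB0 : 0 ≤ B := (abs_nonneg _).trans (hB 0)
  have h1 := norm_setIntegral_le_of_norm_le_const (μ := volume) (s := Ioc 0 R) (f := η) (C := B)
    (by simp) (fun x _ => hB x)
  rw [Real.norm_eq_abs] at h1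
  refine h1.trans ?_
  have : volume.real (Ioc 0 R) = R := by simp [hR.1]
  rw [this]
  nlinarith [hR.2]

theorem integrableOn_of_abs_le {η : ℝ → ℝ} {B : ℝ} (hη : Measurable η) (hB : ∀ R, |η R| ≤ B)
    {a b : ℝ} : IntegrableOn η (Ioc a b) :=
  Measure.integrableOn_of_bounded (M := B) (by simp) hη.aestronglyMeasurable
    (Eventually.of_forall fun x => hB x)

theorem WeakStationary.integral_eq_zero_of_mean_zero (hw : WeakStationary r q P Q)
    (hq : ∀ R, 0 < q R) (hr0 : 0 ≤ r 0) (hrpos : ∀ R ∈ Ioc (0 : ℝ) 1, 0 < r R)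
    (hmono : MonotoneOn r (Icc 0 1)) (hPm : AEMeasurable P (volume.restrict (Ioc 0 1)))
    (hQm : AEMeasurable Q (volume.restrict (Ioc 0 1)))
    (hPq : IntegrableOn (fun R => P R * q R) (Ioc 0 1))
    (hQr : IntegrableOn (fun R => Q R * r R) (Ioc 0 1))
    {η : ℝ → ℝ} {a B : ℝ} (ha0 : 0 < a) (ha1 : a ≤ 1) (hη : Measurable η) (hB : ∀ R, |η R| ≤ B)
    (hsupp : ∀ R, η R ≠ 0 → R ∈ Ioc a 1 ∧ a ≤ q R) (hmean : ∫ t in Ioc (0 : ℝ) 1, η t = 0) :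
    ∫ t in Ioc (0 : ℝ) 1, (P t + ∫ R in Ioc t 1, Q R) * η t = 0 := by
  have hB0 : 0 ≤ B := (abs_nonneg _).trans (hB 0)
  have hra := hrpos a ⟨ha0, ha1⟩
  set φ : ℝ → ℝ := fun R => ∫ t in Ioc 0 R, η t with hφ
  have hηi : ∀ a b : ℝ, IntegrableOn η (Ioc a b) := fun a b => integrableOn_of_abs_le hη hB
  have hzero : ∀ R ≤ a, φ R = 0 := fun R hR => by
    refine setIntegral_eq_zero_of_forall_eq_zero fun t ht => ?_
    by_contra hne
    exact absurd (hsupp t hne).1.1 (not_lt.2 (ht.2.trans hR))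
  have hφa : ∀ R, a ≤ R → φ R = ∫ t in Ioc a R, η t := fun R hR => by
    have h0 := hzero a le_rfl
    simp only [hφ] at h0 ⊢
    rw [setIntegral_Ioc_add_Ioc (hηi 0 R) ⟨ha0.le, hR⟩, h0, zero_add]
  set M := B / a + B / r a with hM
  have hηM : ∀ R, |η R| ≤ M * q R := fun R => by
    have h2 : 0 ≤ B / r a * q R := by have := hq R; positivity
    by_cases hne : η R = 0
    · rw [hne, abs_zero]; have := hq R; positivity
    · have h3 : B ≤ B / a * q R := by
        rw [div_mul_eq_mul_div, le_div_iff₀ ha0]; gcongr; exact (hsupp R hne).2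
      rw [hM, add_mul]; linarith [hB R]
  have hBa : 0 ≤ B / a := by positivity
  have hφM : ∀ R ∈ Icc (0 : ℝ) 1, |φ R| ≤ M * r R := fun R hR => by
    have hRr : 0 ≤ r R := hr0.trans (hmono ⟨le_rfl, zero_le_one⟩ hR hR.1)
    rcases le_total R a with hRa | hRa
    · rw [hzero R hRa, abs_zero]; positivity
    · have h1 := abs_setIntegral_Ioc_le hB hR
      have h2 : B ≤ B / r a * r R := by
        rw [div_mul_eq_mul_div, le_div_iff₀ hra]; gcongr
        exact hmono ⟨ha0.le, ha1⟩ hR hRa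
      have h3 : 0 ≤ B / a * r R := by positivity
      rw [hM, add_mul]; exact h1.trans (by linarith)
  have hst := hw η φ M hη hηM (fun R _ => by simp [hφ]) hmean hφM
  have hφc : ContinuousOn φ (Icc 0 1) :=
    intervalIntegral.continuousOn_primitive ((integrableOn_Icc_iff_integrableOn_Ioc enorm_ne_top).2 (hηi 0 1))
  have hφm : AEMeasurable φ (volume.restrict (Ioc 0 1)) :=
    (hφc.mono Ioc_subset_Icc_self).aemeasurable measurableSet_Ioc
  have hPη : IntegrableOn (fun R => P R * η R) (Ioc 0 1) :=
    integrableOn_mul_of_dominated measurableSet_Ioc hPm hη.aemeasurable hPq (fun R _ => hq R)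
      (fun R _ => hηM R)
  have hQφ : IntegrableOn (fun R => Q R * φ R) (Ioc 0 1) :=
    integrableOn_mul_of_dominated measurableSet_Ioc hQm hφm hQr hrpos
      (fun R hR => hφM R (Ioc_subset_Icc_self hR))
  rw [integral_add hPη hQφ] at hst
  have hsub : Ioc a 1 ⊆ Ioc (0 : ℝ) 1 := Ioc_subset_Ioc_left ha0.le
  have hQa := integrableOn_of_mul_mono hrpos hmono hQm hQr ha0.le ha1 hra
  have hparts : ∫ R in Ioc (0 : ℝ) 1, Q R * φ R
      = ∫ t in Ioc (0 : ℝ) 1, η t * ∫ R in Ioc t 1, Q R := by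
    rw [setIntegral_eq_of_subset_of_forall_sdiff_eq_zero measurableSet_Ioc hsub,
      setIntegral_eq_of_subset_of_forall_sdiff_eq_zero (t := Ioc (0 : ℝ) 1)
        (f := fun t => η t * ∫ R in Ioc t 1, Q R) measurableSet_Ioc hsub,
      ← setIntegral_mul_primitive_eq hQa (hηi _ _)]
    · exact setIntegral_congr_fun measurableSet_Ioc fun R hR => by rw [hφa R hR.1.le]
    · intro t ht
      have : η t = 0 := by
        by_contra hne
        exact ht.2 (hsupp t hne).1
      rw [this, zero_mul]
    · intro t ht
      have : t ≤ a := by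
        by_contra hne
        exact ht.2 ⟨not_le.1 hne, ht.1.2⟩
      rw [hzero t this, mul_zero]
  have hηQ : IntegrableOn (fun t => η t * ∫ R in Ioc t 1, Q R) (Ioc 0 1) := by
    have hc := continuousOn_tail_integral hQa
    have h1 : IntegrableOn (fun t => η t * ∫ R in Ioc t 1, Q R) (Ioc a 1) :=
      (((integrableOn_Icc_iff_integrableOn_Ioc enorm_ne_top).2 (hηi a 1)).mul_continuousOn hc
        isCompact_Icc).mono_set Ioc_subset_Icc_self
    refine h1.of_forall_sdiff_eq_zero measurableSet_Ioc fun t ht => ?_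
    have : η t = 0 := by
      by_contra hne
      exact ht.2 (hsupp t hne).1
    rw [this, zero_mul]
  rw [hparts, ← integral_add hPη hηQ] at hst
  refine Eq.trans (integral_congr_ae (Eventually.of_forall fun t => ?_)) hst
  ring

/-- Sets exhausting `(0,1]` on which `q` is bounded below and `F` is bounded. -/
def testSet (q F : ℝ → ℝ) (k : ℕ) : Set ℝ :=
  Ioc (1 / ((k : ℝ) + 1)) 1 ∩ ({R | 1 / ((k : ℝ) + 1) ≤ q R} ∩ {R | |F R| ≤ k})

theorem measurableSet_testSet {F : ℝ → ℝ} (hq : Measurable q) (hF : Measurable F) (k : ℕ) :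
    MeasurableSet (testSet q F k) :=
  measurableSet_Ioc.inter ((measurableSet_le measurable_const hq).inter
    (measurableSet_le hF.abs measurable_const))

theorem testSet_subset (q F : ℝ → ℝ) (k : ℕ) : testSet q F k ⊆ Ioc 0 1 := fun _ hR =>
  ⟨lt_trans (by positivity) hR.1.1, hR.1.2⟩

theorem testSet_mono (q F : ℝ → ℝ) : Monotone (testSet q F) := fun k l hkl R hR => by
  have h1 : 1 / ((l : ℝ) + 1) ≤ 1 / ((k : ℝ) + 1) := by gcongr
  have h2 : (k : ℝ) ≤ l := by exact_mod_cast hkl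
  exact ⟨⟨h1.trans_lt hR.1.1, hR.1.2⟩, h1.trans hR.2.1, le_trans hR.2.2 h2⟩

theorem exists_mem_testSet (hq : ∀ R, 0 < q R) (F : ℝ → ℝ) {R : ℝ} (hR : R ∈ Ioc (0 : ℝ) 1) :
    ∃ k, R ∈ testSet q F k := by
  obtain ⟨k₁, hk₁⟩ := exists_nat_one_div_lt hR.1
  obtain ⟨k₂, hk₂⟩ := exists_nat_one_div_lt (hq R)
  obtain ⟨k₃, hk₃⟩ := exists_nat_ge |F R|
  refine ⟨max k₁ (max k₂ k₃), ⟨?_, hR.2⟩, ?_, ?_⟩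
  · refine lt_of_le_of_lt ?_ hk₁
    gcongr; exact le_max_left _ _
  · refine le_trans ?_ hk₂.le
    gcongr; exact le_max_of_le_right (le_max_left _ _)
  · refine hk₃.trans ?_
    gcongr; exact le_max_of_le_right (le_max_right _ _)

theorem continuousOn_tail_integral_Ioc (hQ : ∀ a ∈ Ioc (0 : ℝ) 1, IntegrableOn Q (Ioc a 1)) :
    ContinuousOn (fun t => ∫ R in Ioc t 1, Q R) (Ioc 0 1) := by
  intro t ht
  have h2 : t / 2 ∈ Ioc (0 : ℝ) 1 := ⟨by linarith [ht.1], by linarith [ht.1, ht.2]⟩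
  refine (continuousOn_tail_integral (hQ _ h2) t
    ⟨by linarith [ht.1], ht.2⟩).mono_of_mem_nhdsWithin ?_
  refine mem_nhdsWithin.2 ⟨Ioi (t / 2), isOpen_Ioi, by simp [ht.1], ?_⟩
  rintro s ⟨hs1, hs2⟩
  exact ⟨le_of_lt hs1, hs2.2⟩

/-- The du Bois-Reymond lemma, with the natural boundary condition at `0` when `r 0 > 0`. -/
theorem WeakStationary.exists_ae_eq (hw : WeakStationary r q P Q)
    (hq : ∀ R, 0 < q R) (hqm : Measurable q) (hr0 : 0 ≤ r 0)
    (hrpos : ∀ R ∈ Ioc (0 : ℝ) 1, 0 < r R)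
    (hmono : MonotoneOn r (Icc 0 1)) (hPm : AEMeasurable P (volume.restrict (Ioc 0 1)))
    (hQm : AEMeasurable Q (volume.restrict (Ioc 0 1)))
    (hPq : IntegrableOn (fun R => P R * q R) (Ioc 0 1))
    (hQr : IntegrableOn (fun R => Q R * r R) (Ioc 0 1)) :
    ∃ C : ℝ, (∀ᵐ t ∂(volume.restrict (Ioc (0 : ℝ) 1)), P t = C - ∫ R in Ioc t 1, Q R) ∧
      (0 < r 0 → C = ∫ R in Ioc (0 : ℝ) 1, Q R) := by
  have hQa : ∀ a ∈ Ioc (0 : ℝ) 1, IntegrableOn Q (Ioc a 1) := fun a ha =>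
    integrableOn_of_mul_mono hrpos hmono hQm hQr ha.1.le ha.2 (hrpos a ha)
  have hFm : AEMeasurable (fun t => P t + ∫ R in Ioc t 1, Q R) (volume.restrict (Ioc 0 1)) :=
    hPm.add ((continuousOn_tail_integral_Ioc hQa).aemeasurable measurableSet_Ioc)
  set F := hFm.mk _ with hF
  have hFmeas : Measurable F := hFm.measurable_mk
  have hFeq : (fun t => P t + ∫ R in Ioc t 1, Q R) =ᵐ[volume.restrict (Ioc 0 1)] F := hFm.ae_eq_mk
  have hSm := measurableSet_testSet hqm hFmeas
  have hSfin : ∀ k, volume (testSet q F k) ≠ ∞ := fun k =>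
    ((measure_mono (testSet_subset q F k)).trans_lt (by simp)).ne
  obtain ⟨k₀, hk₀⟩ : ∃ k, volume (testSet q F k) ≠ 0 := by
    by_contra! hall
    have h0 : volume (⋃ k, testSet q F k) = 0 := measure_iUnion_null hall
    have h1 : Ioc (0 : ℝ) 1 ⊆ ⋃ k, testSet q F k := fun R hR =>
      mem_iUnion.2 (exists_mem_testSet hq F hR)
    have := measure_mono_null h1 h0
    simp at this
  set S₀ := testSet q F k₀ with hS₀
  set m₀ := volume.real S₀ with hm₀
  have hm₀pos : 0 < m₀ := ENNReal.toReal_pos hk₀ (hSfin k₀)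
  set c := (∫ R in S₀, F R) / m₀ with hc
  have hFint : ∀ k, IntegrableOn F (testSet q F k) := fun k =>
    Measure.integrableOn_of_bounded (M := k) (hSfin k) hFmeas.aestronglyMeasurable
      ((ae_restrict_iff' (hSm k)).2 (Eventually.of_forall fun x hx => hx.2.2))
  have hmain : ∀ k, ∀ᵐ R, R ∈ testSet q F k → F R = c := fun k => by
    set S := testSet q F k with hS
    set ν := (∫ R in S, (F R - c)) / m₀ with hν
    set η : ℝ → ℝ := fun R => S.indicator (fun R => F R - c) R - S₀.indicator (fun _ => ν) R with hη
    have hηm : Measurable η := ((hFmeas.sub_const c).indicator (hSm k)).sub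
      (measurable_const.indicator (hSm k₀))
    have hηB : ∀ R, |η R| ≤ (k + |c|) + |ν| := fun R => by
      refine (abs_sub _ _).trans (add_le_add ?_ ?_)
      · by_cases hR : R ∈ S
        · rw [indicator_of_mem hR]
          exact (abs_sub _ _).trans (by gcongr; exact hR.2.2)
        · rw [indicator_of_notMem hR, abs_zero]; positivity
      · by_cases hR : R ∈ S₀
        · rw [indicator_of_mem hR]
        · rw [indicator_of_notMem hR, abs_zero]; positivity
    set j := max k k₀ with hj
    have hsupp : ∀ R, η R ≠ 0 → R ∈ Ioc (1 / ((j : ℝ) + 1)) 1 ∧ 1 / ((j : ℝ) + 1) ≤ q R := by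
      intro R hR
      have : R ∈ testSet q F j := by
        by_contra hn
        have h1 : R ∉ S := fun h => hn (testSet_mono q F (le_max_left _ _) h)
        have h2 : R ∉ S₀ := fun h => hn (testSet_mono q F (le_max_right _ _) h)
        exact hR (by simp [hη, h1, h2])
      exact ⟨this.1, this.2.1⟩
    have hi1 : IntegrableOn (S.indicator fun R => F R - c) (Ioc 0 1) :=
      (((hFint k).sub (integrableOn_const (hSfin k))).integrable_indicator (hSm k)).integrableOn
    have hi2 : ∀ ν : ℝ, IntegrableOn (S₀.indicator fun _ => ν) (Ioc 0 1) := fun ν =>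
      ((integrableOn_const (hSfin k₀)).integrable_indicator (hSm k₀)).integrableOn
    have hinter : ∀ k, Ioc 0 1 ∩ testSet q F k = testSet q F k := fun k =>
      inter_eq_right.2 (testSet_subset q F k)
    have hmean : ∫ t in Ioc (0 : ℝ) 1, η t = 0 := by
      rw [hη, integral_sub hi1 (hi2 ν), setIntegral_indicator (hSm k),
        setIntegral_indicator (hSm k₀), hinter, hinter, setIntegral_const, smul_eq_mul, ← hm₀, hν]
      field_simp
      ring
    have hst := hw.integral_eq_zero_of_mean_zero hq hr0 hrpos hmono hPm hQm hPq hQr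
      (a := 1 / ((j : ℝ) + 1)) (by positivity) (by
        rw [div_le_one (by positivity)]; linarith [(Nat.cast_nonneg j : (0 : ℝ) ≤ j)])
      hηm hηB hsupp hmean
    have hst' : ∫ t in Ioc (0 : ℝ) 1, F t * η t = 0 := by
      refine Eq.trans (integral_congr_ae ?_) hst
      filter_upwards [hFeq] with t ht
      rw [← ht]
    have hsq : IntegrableOn (fun R => (F R - c) ^ 2) S :=
      Measure.integrableOn_of_bounded (M := ((k : ℝ) + |c|) ^ 2) (hSfin k)
        ((hFmeas.sub_const c).pow_const 2).aestronglyMeasurable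
        ((ae_restrict_iff' (hSm k)).2 (Eventually.of_forall fun x hx => by
          rw [norm_pow, Real.norm_eq_abs]
          gcongr
          exact (abs_sub _ _).trans (by gcongr; exact hx.2.2)))
    have hηi : IntegrableOn η (Ioc 0 1) := hi1.sub (hi2 ν)
    have hexp : ∀ t, F t * η t = (S.indicator (fun R => (F R - c) ^ 2) t
        - ν * S₀.indicator (fun R => F R - c) t) + c * η t := fun t => by
      by_cases h1 : t ∈ S <;> by_cases h2 : t ∈ S₀ <;> simp [hη, h1, h2] <;> ring
    have hA : IntegrableOn (S.indicator fun R => (F R - c) ^ 2) (Ioc 0 1) :=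
      (hsq.integrable_indicator (hSm k)).integrableOn
    have hB : IntegrableOn (fun t => ν * S₀.indicator (fun R => F R - c) t) (Ioc 0 1) :=
      ((((hFint k₀).sub (integrableOn_const (hSfin k₀))).integrable_indicator
        (hSm k₀)).integrableOn).const_mul ν
    have hzero : ∫ t in S, (F t - c) ^ 2 = 0 := by
      simp only [hexp] at hst'
      have hAB : IntegrableOn (fun t => S.indicator (fun R => (F R - c) ^ 2) t
        - ν * S₀.indicator (fun R => F R - c) t) (Ioc 0 1) := hA.sub hB
      rw [integral_add hAB (hηi.const_mul c), integral_sub hA hB, integral_const_mul,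
        integral_const_mul, hmean, setIntegral_indicator (hSm k), setIntegral_indicator (hSm k₀),
        hinter, hinter, integral_sub (hFint k₀) (integrableOn_const (hSfin k₀)),
        setIntegral_const, smul_eq_mul, ← hm₀, hc] at hst'
      have : (∫ R in S₀, F R) - m₀ * ((∫ R in S₀, F R) / m₀) = 0 := by field_simp; ring
      rw [this] at hst'
      simpa using hst'
    have := (setIntegral_eq_zero_iff_of_nonneg_ae
      (Eventually.of_forall fun t => sq_nonneg (F t - c)) hsq).1 hzero
    filter_upwards [(ae_restrict_iff' (hSm k)).1 this] with R hR hRS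
    have := hR hRS
    simp only [Pi.zero_apply] at this
    exact sub_eq_zero.1 (pow_eq_zero_iff two_ne_zero |>.1 this)
  have hae : ∀ᵐ t ∂(volume.restrict (Ioc (0 : ℝ) 1)), P t = c - ∫ R in Ioc t 1, Q R := by
    filter_upwards [hFeq, ae_restrict_of_ae (ae_all_iff.2 hmain),
      ae_restrict_mem measurableSet_Ioc] with t ht hall htmem
    obtain ⟨k, hk⟩ := exists_mem_testSet hq F htmem
    have := hall k hk
    rw [← ht] at this
    linarith
  refine ⟨c, hae, fun hr0pos => ?_⟩
  have hQ0 : IntegrableOn Q (Ioc 0 1) :=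
    integrableOn_of_mul_mono hrpos hmono hQm hQr le_rfl zero_le_one hr0pos
  set η : ℝ → ℝ := S₀.indicator fun _ => 1 with hη
  have hηm : Measurable η := measurable_const.indicator (hSm k₀)
  have hηB : ∀ R, |η R| ≤ 1 := fun R => by
    by_cases hR : R ∈ S₀ <;> simp [hη, hR]
  have hηi : ∀ a b : ℝ, IntegrableOn η (Ioc a b) := fun a b => integrableOn_of_abs_le hηm hηB
  have hηint : ∫ t in Ioc (0 : ℝ) 1, η t = m₀ := by
    rw [hη, setIntegral_indicator (hSm k₀), inter_eq_right.2 (testSet_subset q F k₀),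
      setIntegral_const, smul_eq_mul, mul_one]
  have hm₀le : m₀ ≤ 1 := by
    have := abs_setIntegral_Ioc_le hηB (R := 1) ⟨zero_le_one, le_rfl⟩
    rw [hηint] at this
    exact (le_abs_self _).trans this
  set φ : ℝ → ℝ := fun R => -m₀ + ∫ t in Ioc 0 R, η t with hφ
  set M := ((k₀ : ℝ) + 1) + 2 / r 0 with hM
  have hηM : ∀ R, |η R| ≤ M * q R := fun R => by
    have := hq R
    by_cases hR : R ∈ S₀
    · have h1 : 1 / ((k₀ : ℝ) + 1) ≤ q R := hR.2.1
      rw [div_le_iff₀ (by positivity)] at h1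
      have h2 : 0 ≤ 2 / r 0 * q R := by positivity
      rw [hM, add_mul]
      linarith [hηB R]
    · rw [hη, indicator_of_notMem hR, abs_zero]; positivity
  have hφM : ∀ R ∈ Icc (0 : ℝ) 1, |φ R| ≤ M * r R := fun R hR => by
    have hRr : r 0 ≤ r R := hmono ⟨le_rfl, zero_le_one⟩ hR hR.1
    have h1 : |φ R| ≤ 2 := by
      refine (abs_add_le _ _).trans ?_
      rw [abs_neg, abs_of_pos hm₀pos]
      linarith [abs_setIntegral_Ioc_le hηB hR]
    have h2 : 2 ≤ 2 / r 0 * r R := by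
      rw [div_mul_eq_mul_div, le_div_iff₀ hr0pos]; gcongr
    have h3 : 0 ≤ ((k₀ : ℝ) + 1) * r R := mul_nonneg (by positivity) (hr0.trans hRr)
    rw [hM, add_mul]; linarith
  have hst := hw η φ M hηm hηM (fun R _ => by simp [hφ]) (by simp [hφ, hηint]) hφM
  have hφc : ContinuousOn φ (Icc 0 1) := continuousOn_const.add
    (intervalIntegral.continuousOn_primitive
      ((integrableOn_Icc_iff_integrableOn_Ioc enorm_ne_top).2 (hηi 0 1)))
  have hφm : AEMeasurable φ (volume.restrict (Ioc 0 1)) :=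
    (hφc.mono Ioc_subset_Icc_self).aemeasurable measurableSet_Ioc
  have hPη : IntegrableOn (fun R => P R * η R) (Ioc 0 1) :=
    integrableOn_mul_of_dominated measurableSet_Ioc hPm hηm.aemeasurable hPq (fun R _ => hq R)
      (fun R _ => hηM R)
  have hQφ : IntegrableOn (fun R => Q R * φ R) (Ioc 0 1) :=
    integrableOn_mul_of_dominated measurableSet_Ioc hQm hφm hQr hrpos
      (fun R hR => hφM R (Ioc_subset_Icc_self hR))
  have hQη : IntegrableOn (fun R => Q R * ∫ t in Ioc 0 R, η t) (Ioc 0 1) := by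
    refine (hQφ.add (hQ0.mul_const m₀)).congr (Eventually.of_forall fun R => ?_)
    simp only [Pi.add_apply, hφ]; ring
  have hηQ : IntegrableOn (fun t => η t * ∫ R in Ioc t 1, Q R) (Ioc 0 1) :=
    (((integrableOn_Icc_iff_integrableOn_Ioc enorm_ne_top).2 (hηi 0 1)).mul_continuousOn
      (continuousOn_tail_integral hQ0) isCompact_Icc).mono_set Ioc_subset_Icc_self
  have hQφ' : ∫ R in Ioc (0 : ℝ) 1, Q R * φ R
      = (∫ t in Ioc (0 : ℝ) 1, η t * ∫ R in Ioc t 1, Q R) - m₀ * ∫ R in Ioc (0 : ℝ) 1, Q R := by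
    rw [← setIntegral_mul_primitive_eq hQ0 (hηi 0 1), ← integral_const_mul,
      ← integral_sub hQη (hQ0.const_mul m₀)]
    exact integral_congr_ae (Eventually.of_forall fun R => by simp only [hφ]; ring)
  have hsum : ∫ R in Ioc (0 : ℝ) 1, (P R * η R + η R * ∫ t in Ioc R 1, Q t) = c * m₀ := by
    rw [← hηint, ← integral_const_mul]
    refine integral_congr_ae ?_
    filter_upwards [hae] with t ht
    rw [ht]; ring
  rw [integral_add hPη hηQ] at hsum
  rw [integral_add hPη hQφ, hQφ'] at hst
  have : m₀ * (c - ∫ R in Ioc (0 : ℝ) 1, Q R) = 0 := by linarith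
  exact sub_eq_zero.1 ((mul_eq_zero.1 this).resolve_left hm₀pos.ne')

end DuBoisReymond

section Admissible

variable {lam : ℝ} {r r' : ℝ → ℝ}

theorem Adm.continuousOn (hadm : Adm lam r r') : ContinuousOn r (Icc 0 1) :=
  (continuousOn_const.add (intervalIntegral.continuousOn_primitive
    ((integrableOn_Icc_iff_integrableOn_Ioc enorm_ne_top).2 hadm.intg))).congr hadm.ftc

theorem Adm.strictMonoOn (hadm : Adm lam r r') (hq : ∀ R, 0 < r' R) :
    StrictMonoOn r (Icc 0 1) := by
  intro a ha b hb hab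
  have hi : IntegrableOn r' (Ioc 0 b) := hadm.intg.mono_set (Ioc_subset_Ioc_right hb.2)
  have h1 := setIntegral_Ioc_add_Ioc hi ⟨ha.1, hab.le⟩
  have h2 : 0 < ∫ t in Ioc a b, r' t := by
    rw [setIntegral_pos_iff_support_of_nonneg_ae (Eventually.of_forall fun t => (hq t).le)
      (hi.mono_set (Ioc_subset_Ioc_left ha.1))]
    have : Function.support r' = univ := by
      ext t; simp [(hq t).ne']
    simp [this, hab]
  rw [hadm.ftc a ha, hadm.ftc b hb, h1]
  linarith

theorem Adm.pos (hadm : Adm lam r r') (hq : ∀ R, 0 < r' R) {R : ℝ} (hR : R ∈ Ioc (0 : ℝ) 1) :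
    0 < r R :=
  hadm.c0.trans_lt (hadm.strictMonoOn hq ⟨le_rfl, zero_le_one⟩ (Ioc_subset_Icc_self hR) hR.1)

theorem Adm.le_lam (hadm : Adm lam r r') (hq : ∀ R, 0 < r' R) {R : ℝ} (hR : R ∈ Ioc (0 : ℝ) 1) :
    r R ≤ lam :=
  hadm.bc ▸ (hadm.strictMonoOn hq).monotoneOn (Ioc_subset_Icc_self hR) ⟨zero_le_one, le_rfl⟩ hR.2

theorem Adm.congr_deriv {p : ℝ → ℝ} (hadm : Adm lam r r')
    (hp : r' =ᵐ[volume.restrict (Ioc 0 1)] p) : Adm lam r p where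
  intg := hadm.intg.congr hp
  ftc R hR := by
    rw [hadm.ftc R hR]
    congr 1
    exact integral_congr_ae (ae_mono (Measure.restrict_mono (Ioc_subset_Ioc_right hR.2) le_rfl) hp)
  derivPos := by
    filter_upwards [hp, hadm.derivPos] with R h1 h2
    rwa [← h1]
  bc := hadm.bc
  c0 := hadm.c0

theorem adm_linear (hlam : 0 < lam) : Adm lam (fun R => lam * R) (fun _ => lam) where
  intg := integrableOn_const (by simp)
  ftc R hR := by simp [hR.1, mul_comm]
  derivPos := Eventually.of_forall fun _ => hlam
  bc := mul_one lam
  c0 := by simp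

end Admissible

section Energy

variable {n : ℕ} {κ lam : ℝ} {h h' : ℝ → ℝ} {μ : Measure ℝ} {p u : ℝ → ℝ}

theorem aemeasurable_PhiHat_comp (hh : ContinuousOn h (Ioi 0)) (hp : AEMeasurable p μ)
    (hu : AEMeasurable u μ) (hp0 : ∀ᵐ x ∂μ, 0 < p x) (hu0 : ∀ᵐ x ∂μ, 0 < u x) :
    AEMeasurable (fun x => PhiHat n κ h (p x) (u x)) μ := by
  have hd : AEMeasurable (fun x => p x * u x ^ (n - 1)) μ := hp.mul (hu.pow_const _)
  have hhd := aemeasurable_comp_of_continuousOn_Ioi hh hd (by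
    filter_upwards [hp0, hu0] with x h1 h2; positivity)
  exact (((hp.pow_const _).const_mul _).add hhd).add
    ((hd.const_mul κ).mul ((hu.log.const_mul _).const_add _))

theorem aemeasurable_PhiHat1_comp (hh : ContinuousOn h' (Ioi 0)) (hp : AEMeasurable p μ)
    (hu : AEMeasurable u μ) (hp0 : ∀ᵐ x ∂μ, 0 < p x) (hu0 : ∀ᵐ x ∂μ, 0 < u x) :
    AEMeasurable (fun x => PhiHat1 n κ h' (p x) (u x)) μ := by
  have hd : AEMeasurable (fun x => p x * u x ^ (n - 1)) μ := hp.mul (hu.pow_const _)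
  have hhd := aemeasurable_comp_of_continuousOn_Ioi hh hd (by
    filter_upwards [hp0, hu0] with x h1 h2; positivity)
  exact (((hp.pow_const _).const_mul _).add ((hu.pow_const _).mul hhd)).add
    (((hu.pow_const _).const_mul κ).mul ((hu.log.const_mul _).const_add _))

theorem aemeasurable_PhiHat2_comp (hh : ContinuousOn h' (Ioi 0)) (hp : AEMeasurable p μ)
    (hu : AEMeasurable u μ) (hp0 : ∀ᵐ x ∂μ, 0 < p x) (hu0 : ∀ᵐ x ∂μ, 0 < u x) :
    AEMeasurable (fun x => PhiHat2 n κ h' (p x) (u x)) μ := by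
  have hd : AEMeasurable (fun x => p x * u x ^ (n - 1)) μ := hp.mul (hu.pow_const _)
  have hhd := aemeasurable_comp_of_continuousOn_Ioi hh hd (by
    filter_upwards [hp0, hu0] with x h1 h2; positivity)
  exact (hp.mul (hu.pow_const _)).mul ((hhd.add_const κ).add
    (((hu.log.const_add _).const_mul _).const_mul _))

theorem aemeasurable_energyControl_comp (hh : ContinuousOn h (Ioi 0)) (hp : AEMeasurable p μ)
    (hu : AEMeasurable u μ) (hp0 : ∀ᵐ x ∂μ, 0 < p x) (hu0 : ∀ᵐ x ∂μ, 0 < u x) :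
    AEMeasurable (fun x => energyControl n h (p x) (u x)) μ := by
  have hd : AEMeasurable (fun x => p x * u x ^ (n - 1)) μ := hp.mul (hu.pow_const _)
  have hhd := aemeasurable_comp_of_continuousOn_Ioi hh hd (by
    filter_upwards [hp0, hu0] with x h1 h2; positivity)
  exact (((hp.pow_const _).add (hhd.add_const 1)).add hd).add (hd.mul hu.log.abs)

theorem IHatE_congr_deriv {r r' : ℝ → ℝ} (hp : r' =ᵐ[volume.restrict (Ioc 0 1)] p) :
    IHatE n κ lam h r r' = IHatE n κ lam h r p := by
  unfold IHatE
  congr 3 <;>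
  · refine lintegral_congr_ae ?_
    filter_upwards [hp] with R hR
    rw [hR]

theorem coe_ennreal_eq_coe_toReal {x : ℝ≥0∞} (hx : x ≠ ∞) : (x : EReal) = (x.toReal : EReal) := by
  lift x to ℝ≥0 using hx
  rfl

theorem IHatE_eq_coe {r r' : ℝ → ℝ}
    (hf : IntegrableOn (fun R => R ^ (n - 1) * PhiHat n κ h (r' R) (r R / R)) (Ioc 0 1)) :
    IHatE n κ lam h r r' = (((∫ R in Ioc (0 : ℝ) 1, R ^ (n - 1) * PhiHat n κ h (r' R) (r R / R))
      - κ * ((n : ℝ) - 1) / n * lam ^ n * log lam : ℝ) : EReal) := by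
  have h1 := hf.lintegral_lt_top.ne
  have h2 := hf.neg.lintegral_lt_top.ne
  rw [integral_eq_lintegral_pos_part_sub_lintegral_neg_part hf]
  unfold IHatE
  rw [EReal.coe_sub, EReal.coe_sub]
  congr 2
  · exact coe_ennreal_eq_coe_toReal h1
  · exact coe_ennreal_eq_coe_toReal h2

theorem integrableOn_of_IHatE_le {r r' g : ℝ → ℝ} {x : ℝ}
    (hf : AEMeasurable (fun R => R ^ (n - 1) * PhiHat n κ h (r' R) (r R / R))
      (volume.restrict (Ioc 0 1)))
    (hg : IntegrableOn g (Ioc 0 1))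
    (hle : ∀ R ∈ Ioc (0 : ℝ) 1, -g R ≤ R ^ (n - 1) * PhiHat n κ h (r' R) (r R / R))
    (hx : IHatE n κ lam h r r' ≤ (x : EReal)) :
    IntegrableOn (fun R => R ^ (n - 1) * PhiHat n κ h (r' R) (r R / R)) (Ioc 0 1) := by
  set f := fun R => R ^ (n - 1) * PhiHat n κ h (r' R) (r R / R) with hfdef
  have hneg : ∫⁻ R in Ioc (0 : ℝ) 1, ENNReal.ofReal (-f R) ≠ ∞ := by
    refine ne_top_of_le_ne_top hg.lintegral_lt_top.ne (setLIntegral_mono' measurableSet_Ioc ?_)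
    intro R hR
    exact ENNReal.ofReal_le_ofReal (by linarith [hle R hR])
  have hpos : ∫⁻ R in Ioc (0 : ℝ) 1, ENNReal.ofReal (f R) ≠ ∞ := by
    intro htop
    have hval : IHatE n κ lam h r r' = ⊤ := by
      change ((∫⁻ R in Ioc (0 : ℝ) 1, ENNReal.ofReal (f R) : ℝ≥0∞) : EReal)
        - ((∫⁻ R in Ioc (0 : ℝ) 1, ENNReal.ofReal (-f R) : ℝ≥0∞) : EReal) - _ = ⊤
      rw [htop, coe_ennreal_eq_coe_toReal hneg, EReal.coe_ennreal_top, EReal.top_sub_coe,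
        EReal.top_sub_coe]
    rw [hval] at hx
    exact absurd hx (not_le.2 (EReal.coe_lt_top x))
  refine ⟨hf.aestronglyMeasurable, ?_⟩
  rw [hasFiniteIntegral_iff_norm]
  refine lt_of_le_of_lt ?_ (ENNReal.add_lt_top.2 ⟨hpos.lt_top, hneg.lt_top⟩)
  rw [← lintegral_add_left' hf.ennreal_ofReal]
  refine lintegral_mono fun R => ?_
  rcases le_total 0 (f R) with h0 | h0
  · rw [Real.norm_of_nonneg h0]; exact le_self_add
  · rw [Real.norm_of_nonpos h0]; exact le_add_self

end Energy

theorem integral_deriv_eq_zero_of_isMin {α : Type*} [MeasurableSpace α] {μ : Measure α}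
    {F F' : ℝ → α → ℝ} {bound : α → ℝ} {ε : ℝ} (hε : 0 < ε)
    (hF : ∀ t ∈ Metric.ball (0 : ℝ) ε, AEStronglyMeasurable (F t) μ) (hF0 : Integrable (F 0) μ)
    (hF' : AEStronglyMeasurable (F' 0) μ)
    (hle : ∀ᵐ a ∂μ, ∀ t ∈ Metric.ball (0 : ℝ) ε, ‖F' t a‖ ≤ bound a) (hbound : Integrable bound μ)
    (hd : ∀ᵐ a ∂μ, ∀ t ∈ Metric.ball (0 : ℝ) ε, HasDerivAt (F · a) (F' t a) t)
    (hmin : ∀ t ∈ Metric.ball (0 : ℝ) ε, Integrable (F t) μ → ∫ a, F 0 a ∂μ ≤ ∫ a, F t a ∂μ) :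
    ∫ a, F' 0 a ∂μ = 0 := by
  have hball : Metric.ball (0 : ℝ) ε ∈ nhds 0 := Metric.ball_mem_nhds 0 hε
  have hderiv := (hasDerivAt_integral_of_dominated_loc_of_deriv_le hball
    (by filter_upwards [hball] using hF) hF0 hF' hle hbound hd).2
  have h_int : ∀ t ∈ Metric.ball (0 : ℝ) ε, Integrable (F t) μ := by
    intro t ht
    have hsub : Integrable (F t - F 0) μ := by
      refine (hbound.mul_const ‖t‖).mono' ((hF t ht).sub hF0.1) ?_
      filter_upwards [hle, hd] with a h1 h2
      have := (convex_ball (0 : ℝ) ε).norm_image_sub_le_of_norm_hasDerivWithin_le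
        (fun x hx => (h2 x hx).hasDerivWithinAt) h1 (Metric.mem_ball_self hε) ht
      simpa using this
    simpa using hsub.add hF0
  refine IsLocalMin.hasDerivAt_eq_zero ?_ hderiv
  filter_upwards [hball] with t ht using hmin t ht (h_int t ht)

section FirstVariation

variable {n : ℕ} {κ K γ₀ lam : ℝ} {h h' h'' r r' : ℝ → ℝ}

theorem GoodH.continuousOn (hh : GoodH h h' h'') : ContinuousOn h (Ioi 0) := fun d hd =>
  (hh.deriv1 d hd).continuousAt.continuousWithinAt

theorem GoodH.continuousOn_deriv (hh : GoodH h h' h'') : ContinuousOn h' (Ioi 0) := fun d hd =>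
  (hh.deriv2 d hd).continuousAt.continuousWithinAt

theorem Adm.aemeasurable_div (hadm : Adm lam r r') :
    AEMeasurable (fun R => r R / R) (volume.restrict (Ioc 0 1)) :=
  ((hadm.continuousOn.mono Ioc_subset_Icc_self).aemeasurable measurableSet_Ioc).div
    aemeasurable_id

theorem ae_restrict_Ioc_of_forall {p : ℝ → Prop} (hp : ∀ R ∈ Ioc (0 : ℝ) 1, p R) :
    ∀ᵐ R ∂(volume.restrict (Ioc (0 : ℝ) 1)), p R :=
  (ae_restrict_mem measurableSet_Ioc).mono hp

theorem Adm.integrableOn_density (hn : 2 ≤ n) (hκ : 0 < κ) (hh : GoodH h h' h'') (hlam : 0 < lam)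
    (hadm : Adm lam r r') (hq : ∀ R, 0 < r' R) (hqm : Measurable r')
    (hmin : ∀ s s' : ℝ → ℝ, Adm lam s s' → IHatE n κ lam h r r' ≤ IHatE n κ lam h s s') :
    IntegrableOn (fun R => R ^ (n - 1) * PhiHat n κ h (r' R) (r R / R)) (Ioc 0 1) := by
  obtain ⟨C, hC, C', hC', hle⟩ := weighted_energyControl_le hn hκ hlam hh.nonneg
  have hlin : IntegrableOn (fun R => R ^ (n - 1) * PhiHat n κ h lam (lam * R / R)) (Ioc 0 1) := by
    have : IntegrableOn (fun R : ℝ => R ^ (n - 1) * PhiHat n κ h lam lam) (Ioc 0 1) :=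
      (Continuous.integrableOn_Ioc (by fun_prop))
    refine this.congr_fun (fun R hR => ?_) measurableSet_Ioc
    simp only [mul_div_cancel_right₀ lam hR.1.ne']
  have hx := hmin _ _ (adm_linear hlam)
  rw [IHatE_eq_coe hlin] at hx
  have hg : IntegrableOn (fun R => C⁻¹ * (C' * (r' R + 1))) (Ioc 0 1) :=
    ((hadm.intg.add (integrableOn_const (by simp))).const_mul C').const_mul C⁻¹
  refine integrableOn_of_IHatE_le ?_ hg (fun R hR => ?_) hx
  · exact (aemeasurable_id.pow_const _).mul (aemeasurable_PhiHat_comp hh.continuousOn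
      hqm.aemeasurable hadm.aemeasurable_div (Eventually.of_forall hq)
      (ae_restrict_Ioc_of_forall fun R hR => div_pos (hadm.pos hq hR) hR.1))
  · have h1 := hle R (r' R) (r R) hR.1 hR.2 (hq R) (hadm.pos hq hR) (hadm.le_lam hq hR)
    have h2 : 0 ≤ R ^ (n - 1) * energyControl n h (r' R) (r R / R) :=
      mul_nonneg (pow_nonneg hR.1.le _)
        (energyControl_pos hh.nonneg (hq R) (div_pos (hadm.pos hq hR) hR.1)).le
    rw [neg_le_iff_add_nonneg]
    have h3 : 0 ≤ C⁻¹ * (C * (R ^ (n - 1) * PhiHat n κ h (r' R) (r R / R)) + C' * (r' R + 1)) :=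
      mul_nonneg (inv_nonneg.2 hC.le) (h2.trans h1)
    rwa [mul_add, inv_mul_cancel_left₀ hC.ne'] at h3

theorem Adm.integrableOn_energyControl (hn : 2 ≤ n) (hκ : 0 < κ) (hh : GoodH h h' h'')
    (hlam : 0 < lam) (hadm : Adm lam r r') (hq : ∀ R, 0 < r' R) (hqm : Measurable r')
    (h_int : IntegrableOn (fun R => R ^ (n - 1) * PhiHat n κ h (r' R) (r R / R)) (Ioc 0 1)) :
    IntegrableOn (fun R => R ^ (n - 1) * energyControl n h (r' R) (r R / R)) (Ioc 0 1) := by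
  obtain ⟨C, -, C', -, hle⟩ := weighted_energyControl_le hn hκ hlam hh.nonneg
  refine Integrable.mono' ((h_int.const_mul C).add
    ((hadm.intg.add (integrableOn_const (C := (1 : ℝ)) (by simp : volume (Ioc (0 : ℝ) 1) ≠ ∞))).const_mul C'))
    (AEMeasurable.aestronglyMeasurable ?_)
    (ae_restrict_Ioc_of_forall fun R hR => ?_)
  · exact (aemeasurable_id.pow_const _).mul (aemeasurable_energyControl_comp hh.continuousOn
      hqm.aemeasurable hadm.aemeasurable_div (Eventually.of_forall hq)
      (ae_restrict_Ioc_of_forall fun R hR => div_pos (hadm.pos hq hR) hR.1))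
  · have h2 : 0 ≤ R ^ (n - 1) * energyControl n h (r' R) (r R / R) :=
      mul_nonneg (pow_nonneg hR.1.le _)
        (energyControl_pos hh.nonneg (hq R) (div_pos (hadm.pos hq hR) hR.1)).le
    rw [Real.norm_of_nonneg h2]
    exact hle R (r' R) (r R) hR.1 hR.2 (hq R) (hadm.pos hq hR) (hadm.le_lam hq hR)

/-- The flux `R^{n−1} Φ̂_{,1}` along a deformation. -/
def radialFlux (n : ℕ) (κ : ℝ) (h' r r' : ℝ → ℝ) (R : ℝ) : ℝ :=
  R ^ (n - 1) * PhiHat1 n κ h' (r' R) (r R / R)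

/-- The source `(n−1) R^{n−2} Φ̂_{,2}` along a deformation. -/
def radialSource (n : ℕ) (κ : ℝ) (h' r r' : ℝ → ℝ) (R : ℝ) : ℝ :=
  ((n : ℝ) - 1) * R ^ (n - 2) * PhiHat2 n κ h' (r' R) (r R / R)

theorem Adm.aemeasurable_radialFlux (hh : GoodH h h' h'') (hadm : Adm lam r r')
    (hq : ∀ R, 0 < r' R) (hqm : Measurable r') :
    AEMeasurable (radialFlux n κ h' r r') (volume.restrict (Ioc 0 1)) :=
  (aemeasurable_id.pow_const _).mul (aemeasurable_PhiHat1_comp hh.continuousOn_deriv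
    hqm.aemeasurable hadm.aemeasurable_div (Eventually.of_forall hq)
    (ae_restrict_Ioc_of_forall fun _ hR => div_pos (hadm.pos hq hR) hR.1))

theorem Adm.aemeasurable_radialSource (hh : GoodH h h' h'') (hadm : Adm lam r r')
    (hq : ∀ R, 0 < r' R) (hqm : Measurable r') :
    AEMeasurable (radialSource n κ h' r r') (volume.restrict (Ioc 0 1)) :=
  ((aemeasurable_id.pow_const _).const_mul _).mul (aemeasurable_PhiHat2_comp hh.continuousOn_deriv
    hqm.aemeasurable hadm.aemeasurable_div (Eventually.of_forall hq)
    (ae_restrict_Ioc_of_forall fun _ hR => div_pos (hadm.pos hq hR) hR.1))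

theorem pow_sub_two_mul {n : ℕ} (hn : 2 ≤ n) {R : ℝ} : R ^ (n - 2) * R = R ^ (n - 1) := by
  rw [← pow_succ]; congr 1; omega

theorem Adm.integrableOn_radialFlux_mul (hn : 2 ≤ n) (hκ : 0 < κ) (hK : 0 < K) (hγ₀ : 0 < γ₀)
    (hh : GoodH h h' h'')
    (hctrl : ∀ d : ℝ, 0 < d → ∀ c : ℝ, |c - 1| ≤ γ₀ → |d * h' (c * d)| ≤ K * (h d + 1))
    (hadm : Adm lam r r') (hq : ∀ R, 0 < r' R) (hqm : Measurable r')
    (hE : IntegrableOn (fun R => R ^ (n - 1) * energyControl n h (r' R) (r R / R)) (Ioc 0 1)) :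
    IntegrableOn (fun R => radialFlux n κ h' r r' R * r' R) (Ioc 0 1) := by
  refine Integrable.mono' (hE.const_mul (2 ^ n * (K + κ * (3 * n))))
    ((hadm.aemeasurable_radialFlux hh hq hqm).mul hqm.aemeasurable).aestronglyMeasurable
    (ae_restrict_Ioc_of_forall fun R hR => ?_)
  have hb := abs_PhiHat1_mul_le hn hκ hK hh.nonneg hctrl (hq R) (div_pos (hadm.pos hq hR) hR.1)
    (x := 1) (y := 1) (by norm_num) (by norm_num) (by norm_num) (by norm_num) (by simp [hγ₀.le])
  rw [mul_one, mul_one] at hb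
  have hR0 := pow_nonneg hR.1.le (n - 1)
  rw [radialFlux, mul_assoc, Real.norm_eq_abs, abs_mul, abs_of_nonneg hR0, mul_left_comm]
  gcongr

theorem Adm.integrableOn_radialSource_mul (hn : 2 ≤ n) (hκ : 0 < κ) (hK : 0 < K) (hγ₀ : 0 < γ₀)
    (hh : GoodH h h' h'')
    (hctrl : ∀ d : ℝ, 0 < d → ∀ c : ℝ, |c - 1| ≤ γ₀ → |d * h' (c * d)| ≤ K * (h d + 1))
    (hadm : Adm lam r r') (hq : ∀ R, 0 < r' R) (hqm : Measurable r')
    (hE : IntegrableOn (fun R => R ^ (n - 1) * energyControl n h (r' R) (r R / R)) (Ioc 0 1)) :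
    IntegrableOn (fun R => radialSource n κ h' r r' R * r R) (Ioc 0 1) := by
  have hrm : AEMeasurable r (volume.restrict (Ioc 0 1)) :=
    (hadm.continuousOn.mono Ioc_subset_Icc_self).aemeasurable measurableSet_Ioc
  refine Integrable.mono' (hE.const_mul (((n : ℝ) - 1) * (2 ^ n * (K + κ * (3 * n)))))
    ((hadm.aemeasurable_radialSource hh hq hqm).mul hrm).aestronglyMeasurable
    (ae_restrict_Ioc_of_forall fun R hR => ?_)
  have hb := abs_PhiHat2_mul_le hn hκ hK hh.nonneg hctrl (hq R) (div_pos (hadm.pos hq hR) hR.1)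
    (x := 1) (y := 1) (by norm_num) (by norm_num) (by norm_num) (by norm_num) (by simp [hγ₀.le])
  rw [mul_one, mul_one] at hb
  have hR0 := pow_nonneg hR.1.le (n - 1)
  have hn1 : (0 : ℝ) ≤ (n : ℝ) - 1 := by
    have : (2 : ℝ) ≤ n := by exact_mod_cast hn
    linarith
  have hRr : R * (r R / R) = r R := mul_div_cancel₀ _ hR.1.ne'
  have heq : radialSource n κ h' r r' R * r R
      = ((n : ℝ) - 1) * R ^ (n - 1) * (PhiHat2 n κ h' (r' R) (r R / R) * (r R / R)) := by
    rw [radialSource, ← pow_sub_two_mul hn]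
    linear_combination (-(((n : ℝ) - 1) * R ^ (n - 2) * PhiHat2 n κ h' (r' R) (r R / R))) * hRr
  rw [heq, Real.norm_eq_abs, abs_mul, abs_of_nonneg (mul_nonneg hn1 hR0)]
  calc _ ≤ ((n : ℝ) - 1) * R ^ (n - 1) *
        (2 ^ n * (K + κ * (3 * n)) * energyControl n h (r' R) (r R / R)) := by gcongr
    _ = _ := by ring

theorem exists_perturbation_size (n : ℕ) (hγ₀ : 0 < γ₀) : ∃ τ > 0, τ ≤ 1 / 2 ∧
    ∀ x y : ℝ, |x - 1| ≤ τ → |y - 1| ≤ τ → |x * y ^ (n - 1) - 1| ≤ γ₀ := by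
  have hc : ContinuousAt (fun z : ℝ × ℝ => z.1 * z.2 ^ (n - 1)) (1, 1) := by fun_prop
  obtain ⟨δ, hδ, hb⟩ := Metric.continuousAt_iff.1 hc γ₀ hγ₀
  refine ⟨min (δ / 2) (1 / 2), by positivity, min_le_right _ _, fun x y hx hy => ?_⟩
  have hδ' : min (δ / 2) (1 / 2) < δ := (min_le_left _ _).trans_lt (half_lt_self hδ)
  have := hb (x := (x, y)) (by
    rw [Prod.dist_eq, max_lt_iff]
    exact ⟨hx.trans_lt hδ', hy.trans_lt hδ'⟩)
  simp only [one_pow, mul_one, Real.dist_eq] at this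
  exact this.le

theorem Adm.add_smul (hadm : Adm lam r r') (hq : ∀ R, 0 < r' R) {η φ : ℝ → ℝ} {M t : ℝ}
    (hη : Measurable η) (hηM : ∀ R, |η R| ≤ M * r' R)
    (hφ : ∀ R ∈ Icc (0 : ℝ) 1, φ R = φ 0 + ∫ t in Ioc 0 R, η t) (hφ1 : φ 1 = 0)
    (hφM : ∀ R ∈ Icc (0 : ℝ) 1, |φ R| ≤ M * r R) (ht : |t| * M < 1) :
    Adm lam (fun R => r R + t * φ R) (fun R => r' R + t * η R) := by
  have hηint : IntegrableOn η (Ioc 0 1) :=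
    (hadm.intg.const_mul M).mono' hη.aestronglyMeasurable (Eventually.of_forall hηM)
  have hsmall : ∀ a b : ℝ, 0 ≤ b → |a| ≤ M * b → |t * a| ≤ |t| * M * b := fun a b hb hab => by
    rw [abs_mul, mul_assoc]; gcongr
  refine ⟨hadm.intg.add (hηint.const_mul t), fun R hR => ?_, Eventually.of_forall fun R => ?_,
    ?_, ?_⟩
  · have hs : Ioc 0 R ⊆ Ioc 0 1 := Ioc_subset_Ioc_right hR.2
    rw [integral_add (hadm.intg.mono_set hs) ((hηint.mono_set hs).const_mul t),
      integral_const_mul, hφ R hR, hadm.ftc R hR]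
    ring
  · have h1 := (abs_le.1 (hsmall _ _ (hq R).le (hηM R))).1
    have h2 := hq R
    nlinarith
  · simp [hφ1, hadm.bc]
  · have h0 := hadm.c0
    have h1 := (abs_le.1 (hsmall _ _ h0 (hφM 0 ⟨le_rfl, zero_le_one⟩))).1
    nlinarith

/-- Minimizers satisfy the weak Euler–Lagrange equation. -/
theorem Adm.weakStationary (hn : 2 ≤ n) (hκ : 0 < κ) (hK : 0 < K) (hγ₀ : 0 < γ₀)
    (hh : GoodH h h' h'')
    (hctrl : ∀ d : ℝ, 0 < d → ∀ c : ℝ, |c - 1| ≤ γ₀ → |d * h' (c * d)| ≤ K * (h d + 1))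
    (hadm : Adm lam r r') (hq : ∀ R, 0 < r' R) (hqm : Measurable r')
    (h_int : IntegrableOn (fun R => R ^ (n - 1) * PhiHat n κ h (r' R) (r R / R)) (Ioc 0 1))
    (hE : IntegrableOn (fun R => R ^ (n - 1) * energyControl n h (r' R) (r R / R)) (Ioc 0 1))
    (hmin : ∀ s s' : ℝ → ℝ, Adm lam s s' → IHatE n κ lam h r r' ≤ IHatE n κ lam h s s') :
    WeakStationary r r' (radialFlux n κ h' r r') (radialSource n κ h' r r') := by
  intro η φ M hη hηM hφ hφ1 hφM
  obtain ⟨τ, hτ, hτ2, hτc⟩ := exists_perturbation_size n hγ₀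
  have hM : 0 ≤ M := nonneg_of_mul_nonneg_left ((abs_nonneg _).trans (hηM 0)) (hq 0)
  have hn1 : (0 : ℝ) ≤ (n : ℝ) - 1 := by
    have : (2 : ℝ) ≤ n := by exact_mod_cast hn
    linarith
  set ε := τ / (M + 1) with hεdef
  have hε : 0 < ε := by positivity
  have htM : ∀ t ∈ Metric.ball (0 : ℝ) ε, |t| * M ≤ τ := by
    intro t ht
    rw [mem_ball_zero_iff, Real.norm_eq_abs, hεdef, lt_div_iff₀ (by positivity)] at ht
    nlinarith [abs_nonneg t]
  have hdev : ∀ t ∈ Metric.ball (0 : ℝ) ε, ∀ a b : ℝ, 0 < b → |a| ≤ M * b →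
      |(1 + t * a / b) - 1| ≤ τ := by
    intro t ht a b hb hab
    rw [add_sub_cancel_left, abs_div, abs_mul, abs_of_pos hb, div_le_iff₀ hb]
    calc |t| * |a| ≤ |t| * (M * b) := by gcongr
      _ = |t| * M * b := by ring
      _ ≤ τ * b := by gcongr; exact htM t ht
  set B := 2 ^ n * (K + κ * (3 * n)) with hB
  have hadmt : ∀ t ∈ Metric.ball (0 : ℝ) ε,
      Adm lam (fun R => r R + t * φ R) (fun R => r' R + t * η R) := fun t ht =>
    hadm.add_smul hq hη hηM hφ hφ1 hφM (by linarith [htM t ht])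
  have hpert : ∀ t ∈ Metric.ball (0 : ℝ) ε, ∀ a b : ℝ, 0 < b → |a| ≤ M * b → 0 < b + t * a := by
    intro t ht a b hb hab
    have h1 := (abs_le.1 (hdev t ht a b hb hab)).1
    have h2 : 0 < 1 + t * a / b := by linarith
    have h3 : b + t * a = b * (1 + t * a / b) := by field_simp
    rw [h3]; positivity
  have hqt : ∀ t ∈ Metric.ball (0 : ℝ) ε, ∀ R, 0 < r' R + t * η R := fun t ht R =>
    hpert t ht _ _ (hq R) (hηM R)
  have hrt : ∀ t ∈ Metric.ball (0 : ℝ) ε, ∀ R ∈ Ioc (0 : ℝ) 1, 0 < (r R + t * φ R) / R :=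
    fun t ht R hR => div_pos (hpert t ht _ _ (hadm.pos hq hR) (hφM R (Ioc_subset_Icc_self hR))) hR.1
  set F : ℝ → ℝ → ℝ := fun t R => R ^ (n - 1) * PhiHat n κ h (r' R + t * η R) ((r R + t * φ R) / R)
    with hF
  set F' : ℝ → ℝ → ℝ := fun t R => R ^ (n - 1) *
    (PhiHat1 n κ h' (r' R + t * η R) ((r R + t * φ R) / R) * η R
      + ((n : ℝ) - 1) * PhiHat2 n κ h' (r' R + t * η R) ((r R + t * φ R) / R) * (φ R / R)) with hF'
  have h0 : (0 : ℝ) ∈ Metric.ball (0 : ℝ) ε := Metric.mem_ball_self hε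
  have hF'0 : EqOn (F' 0) (fun R => radialFlux n κ h' r r' R * η R
      + radialSource n κ h' r r' R * φ R) (Ioc 0 1) := by
    intro R hR
    have hR0 := hR.1.ne'
    simp only [hF', zero_mul, add_zero, radialFlux, radialSource, ← pow_sub_two_mul hn]
    field_simp
  have hφm : AEMeasurable φ (volume.restrict (Ioc 0 1)) := by
    have hηint : IntegrableOn η (Ioc 0 1) :=
      (hadm.intg.const_mul M).mono' hη.aestronglyMeasurable (Eventually.of_forall hηM)
    exact (((continuousOn_const.add (intervalIntegral.continuousOn_primitive
      ((integrableOn_Icc_iff_integrableOn_Ioc enorm_ne_top).2 hηint))).congr hφ).mono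
      Ioc_subset_Icc_self).aemeasurable measurableSet_Ioc
  have hzero : ∫ R in Ioc (0 : ℝ) 1, F' 0 R = 0 := by
    refine integral_deriv_eq_zero_of_isMin (F := F)
      (bound := fun R => n * M * B * (R ^ (n - 1) * energyControl n h (r' R) (r R / R)))
      hε (fun t ht => ?_) ?_ ?_ ?_ (hE.const_mul _) ?_ ?_
    · exact ((aemeasurable_id.pow_const _).mul (aemeasurable_PhiHat_comp hh.continuousOn
        (hqm.add (hη.const_mul t)).aemeasurable (hadmt t ht).aemeasurable_div
        (Eventually.of_forall (hqt t ht))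
        (ae_restrict_Ioc_of_forall (hrt t ht)))).aestronglyMeasurable
    · simpa only [hF, zero_mul, add_zero] using h_int.integrable
    · refine AEMeasurable.aestronglyMeasurable (AEMeasurable.congr ?_
        (ae_restrict_Ioc_of_forall fun R hR => (hF'0 hR).symm))
      exact ((hadm.aemeasurable_radialFlux hh hq hqm).mul hη.aemeasurable).add
        ((hadm.aemeasurable_radialSource hh hq hqm).mul hφm)
    · refine ae_restrict_Ioc_of_forall fun R hR t ht => ?_
      have hr := hadm.pos hq hR
      have hv : 0 < r R / R := div_pos hr hR.1
      have hφR := hφM R (Ioc_subset_Icc_self hR)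
      have hx := hdev t ht _ _ (hq R) (hηM R)
      have hy := hdev t ht _ _ hr hφR
      have hxe : r' R + t * η R = r' R * (1 + t * η R / r' R) := by
        have := (hq R).ne'; field_simp
      have hye : (r R + t * φ R) / R = r R / R * (1 + t * φ R / r R) := by
        have := hr.ne'; have := hR.1.ne'; field_simp
      have hx' := abs_le.1 hx
      have hy' := abs_le.1 hy
      have hb1 := abs_PhiHat1_mul_le hn hκ hK hh.nonneg hctrl (hq R) hv (by linarith)
        (by linarith) (by linarith) (by linarith) (hτc _ _ hx hy)
      have hb2 := abs_PhiHat2_mul_le hn hκ hK hh.nonneg hctrl (hq R) hv (by linarith)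
        (by linarith) (by linarith) (by linarith) (hτc _ _ hx hy)
      rw [← hxe, ← hye] at hb1 hb2
      set A1 := PhiHat1 n κ h' (r' R + t * η R) ((r R + t * φ R) / R)
      set A2 := PhiHat2 n κ h' (r' R + t * η R) ((r R + t * φ R) / R)
      set E := energyControl n h (r' R) (r R / R)
      have hφR' : |φ R / R| ≤ M * (r R / R) := by
        rw [abs_div, abs_of_pos hR.1, ← mul_div_assoc]
        have := hR.1
        gcongr
      have key : ∀ A a b : ℝ, 0 < b → |a| ≤ M * b → |A * b| ≤ B * E → |A * a| ≤ M * (B * E) := by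
        intro A a b hb hab hA
        rw [abs_mul, abs_of_pos hb] at hA
        rw [abs_mul]
        calc |A| * |a| ≤ |A| * (M * b) := by gcongr
          _ = M * (|A| * b) := by ring
          _ ≤ _ := by gcongr
      have k1 := key A1 (η R) (r' R) (hq R) (hηM R) hb1
      have k2 := key A2 (φ R / R) (r R / R) hv hφR' hb2
      have hR0 := pow_nonneg hR.1.le (n - 1)
      rw [Real.norm_eq_abs, abs_mul, abs_of_nonneg hR0]
      calc R ^ (n - 1) * |A1 * η R + ((n : ℝ) - 1) * A2 * (φ R / R)|
          ≤ R ^ (n - 1) * (|A1 * η R| + ((n : ℝ) - 1) * |A2 * (φ R / R)|) := by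
            gcongr
            refine (abs_add_le _ _).trans_eq ?_
            rw [mul_assoc ((n : ℝ) - 1), abs_mul ((n : ℝ) - 1), abs_of_nonneg hn1]
        _ ≤ R ^ (n - 1) * (M * (B * E) + ((n : ℝ) - 1) * (M * (B * E))) := by gcongr
        _ = _ := by ring
    · refine ae_restrict_Ioc_of_forall fun R hR t ht => ?_
      have hx : HasDerivAt (fun s => r' R + s * η R) (η R) t := by
        simpa using ((hasDerivAt_id t).mul_const (η R)).const_add (r' R)
      have hy : HasDerivAt (fun s => (r R + s * φ R) / R) (φ R / R) t := by
        simpa using (((hasDerivAt_id t).mul_const (φ R)).const_add (r R)).div_const R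
      exact (hasDerivAt_PhiHat_comp hn κ hh.deriv1 hx hy (hqt t ht R) (hrt t ht R hR)).const_mul _
    · intro t ht hFt
      have hm := hmin _ _ (hadmt t ht)
      rw [IHatE_eq_coe h_int, IHatE_eq_coe hFt, EReal.coe_le_coe_iff] at hm
      simpa [hF] using hm
  exact (setIntegral_congr_fun measurableSet_Ioc hF'0).symm.trans hzero

end FirstVariation

section Regularity

variable {n : ℕ} {κ lam : ℝ} {h h' h'' r r' : ℝ → ℝ}

theorem continuousOn_of_strictMonoOn_of_eq {G : ℝ → ℝ → ℝ} {ρ H : ℝ → ℝ} {s : Set ℝ}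
    (hG : ∀ q, 0 < q → ContinuousOn (G q) s) (hmono : ∀ R ∈ s, StrictMonoOn (G · R) (Ioi 0))
    (hH : ContinuousOn H s) (hρ : ∀ R ∈ s, 0 < ρ R) (heq : ∀ R ∈ s, G (ρ R) R = H R) :
    ContinuousOn ρ s := by
  intro R₀ hR₀
  refine tendsto_order.2 ⟨fun a ha => ?_, fun b hb => ?_⟩
  · rcases le_or_gt a 0 with ha0 | ha0
    · filter_upwards [self_mem_nhdsWithin] with R hR using ha0.trans_lt (hρ R hR)
    · have hlt : G a R₀ < H R₀ := heq R₀ hR₀ ▸ hmono R₀ hR₀ ha0 (hρ R₀ hR₀) ha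
      filter_upwards [(hG a ha0 R₀ hR₀).eventually_lt (hH R₀ hR₀) hlt, self_mem_nhdsWithin]
        with R h1 hR
      rw [← heq R hR] at h1
      exact ((hmono R hR).lt_iff_lt ha0 (hρ R hR)).1 h1
  · have hb0 : 0 < b := (hρ R₀ hR₀).trans hb
    have hlt : H R₀ < G b R₀ := heq R₀ hR₀ ▸ hmono R₀ hR₀ (hρ R₀ hR₀) hb0 hb
    filter_upwards [(hH R₀ hR₀).eventually_lt (hG b hb0 R₀ hR₀) hlt, self_mem_nhdsWithin]
      with R h1 hR
    rw [← heq R hR] at h1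
    exact ((hmono R hR).lt_iff_lt (hρ R hR) hb0).1 h1

theorem hasDerivWithinAt_of_eq_sub_tail_integral {f F : ℝ → ℝ} {c : ℝ}
    (hf : ContinuousOn f (Ioc 0 1)) (hF : ∀ R ∈ Ioc (0 : ℝ) 1, F R = c - ∫ t in Ioc R 1, f t)
    {R : ℝ} (hR : R ∈ Ioc (0 : ℝ) 1) : HasDerivWithinAt F (f R) (Ioc 0 1) R := by
  set g : ℝ → ℝ := fun t => f (min t 1) with hg
  have hgc : ContinuousOn g (Ioi 0) :=
    hf.comp (by fun_prop) fun t ht => ⟨lt_min ht one_pos, min_le_right _ _⟩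
  have hgR : g R = f R := by simp [hg, hR.2]
  have hgi : IntervalIntegrable g volume R 1 := by
    refine (hgc.mono fun t ht => ?_).intervalIntegrable
    rw [uIcc_of_le hR.2] at ht
    exact hR.1.trans_le ht.1
  have hd := (intervalIntegral.integral_hasDerivAt_left hgi
    (hgc.stronglyMeasurableAtFilter isOpen_Ioi R hR.1)
    (hgc.continuousAt (Ioi_mem_nhds hR.1))).const_sub c
  rw [neg_neg, hgR] at hd
  refine hd.hasDerivWithinAt.congr_of_mem (fun s hs => ?_) hR
  rw [hF s hs, intervalIntegral.integral_of_le hs.2]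
  congr 1
  refine setIntegral_congr_fun measurableSet_Ioc fun t ht => ?_
  simp [hg, ht.2]

theorem GoodH.strictMonoOn_deriv (hh : GoodH h h' h'') : StrictMonoOn h' (Ioi 0) := by
  refine strictMonoOn_of_deriv_pos (convex_Ioi 0) hh.continuousOn_deriv fun d hd => ?_
  rw [interior_Ioi] at hd
  rw [(hh.deriv2 d hd).deriv]
  exact hh.hpp_pos d hd

theorem GoodH.strictMonoOn_PhiHat1 (hh : GoodH h h' h'') (hκ : 0 < κ) {v : ℝ} (hv : 0 < v) :
    StrictMonoOn (fun q => PhiHat1 n κ h' q v) (Ioi 0) := by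
  intro a ha b hb hab
  have ha0 : 0 < a := ha
  have hb0 : 0 < b := hb
  have h1 : h' (a * v ^ (n - 1)) < h' (b * v ^ (n - 1)) :=
    hh.strictMonoOn_deriv (mul_pos ha0 (by positivity)) (mul_pos hb0 (by positivity)) (by gcongr)
  have h2 : κ * a ^ (n - 1) ≤ κ * b ^ (n - 1) := by gcongr
  have h3 : v ^ (n - 1) * h' (a * v ^ (n - 1)) < v ^ (n - 1) * h' (b * v ^ (n - 1)) := by gcongr
  simp only [PhiHat1]
  linarith

theorem GoodH.continuousOn_PhiHat1_comp (hh : GoodH h h' h'') {p u : ℝ → ℝ} {s : Set ℝ}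
    (hp : ContinuousOn p s) (hu : ContinuousOn u s) (hp0 : ∀ R ∈ s, 0 < p R)
    (hu0 : ∀ R ∈ s, 0 < u R) : ContinuousOn (fun R => PhiHat1 n κ h' (p R) (u R)) s := by
  have hd : ContinuousOn (fun R => h' (p R * u R ^ (n - 1))) s :=
    hh.continuousOn_deriv.comp (hp.mul (hu.pow _)) fun R hR =>
      mul_pos (hp0 R hR) (pow_pos (hu0 R hR) _)
  have hl : ContinuousOn (fun R => log (u R)) s := hu.log fun R hR => (hu0 R hR).ne'
  exact (((hp.pow _).const_mul κ).add ((hu.pow _).mul hd)).add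
    (((hu.pow _).const_mul κ).mul ((hl.const_mul _).const_add _))

theorem GoodH.exists_PhiHat1_eq (hh : GoodH h h' h'') (hκ : 0 < κ) {v : ℝ} (hv : 0 < v) (c : ℝ) :
    ∃ q, 0 < q ∧ PhiHat1 n κ h' q v = c := by
  have hv1 : 0 < v ^ (n - 1) := by positivity
  have hcont : ContinuousOn (fun q => PhiHat1 n κ h' q v) (Ioi 0) :=
    hh.continuousOn_PhiHat1_comp continuousOn_id continuousOn_const (fun _ hq => hq) fun _ _ => hv
  set c₀ := κ * v ^ (n - 1) * (((n : ℝ) - 1) / n + ((n : ℝ) - 1) * log v) with hc₀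
  have hbot : ∃ a, 0 < a ∧ PhiHat1 n κ h' a v ≤ c := by
    have ht : Tendsto (fun q : ℝ => q * v ^ (n - 1)) (nhdsWithin 0 (Ioi 0))
        (nhdsWithin 0 (Ioi 0)) := by
      refine tendsto_nhdsWithin_iff.2 ⟨?_, ?_⟩
      · have : ContinuousAt (fun q : ℝ => q * v ^ (n - 1)) 0 := by fun_prop
        simpa using this.tendsto.mono_left (nhdsWithin_le_nhds (s := Ioi 0))
      · filter_upwards [self_mem_nhdsWithin] with q hq using mul_pos hq hv1
    have he := (hh.dlim_zero.comp ht).eventually_le_atBot ((c - κ - c₀) / v ^ (n - 1))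
    obtain ⟨a, ⟨h1, h2⟩, h3⟩ := ((he.and (Ioc_mem_nhdsGT one_pos)).and self_mem_nhdsWithin).exists
    have ha : 0 < a := h3
    refine ⟨a, ha, ?_⟩
    rw [Function.comp_apply, le_div_iff₀ hv1] at h1
    have h4 : κ * a ^ (n - 1) ≤ κ * 1 := by
      gcongr; exact pow_le_one₀ ha.le h2.2
    simp only [PhiHat1, ← hc₀]
    linarith
  have htop : ∃ b, 0 < b ∧ c ≤ PhiHat1 n κ h' b v := by
    have he := (hh.dlim_top.comp (tendsto_id.atTop_mul_const hv1)).eventually_ge_atTop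
      ((c - c₀) / v ^ (n - 1))
    obtain ⟨b, h1, hb⟩ := (he.and (eventually_gt_atTop 0)).exists
    refine ⟨b, hb, ?_⟩
    rw [Function.comp_apply, id, div_le_iff₀ hv1] at h1
    have h4 : 0 ≤ κ * b ^ (n - 1) := by positivity
    simp only [PhiHat1, ← hc₀]
    linarith
  obtain ⟨a, ha, hac⟩ := hbot
  obtain ⟨b, hb, hbc⟩ := htop
  obtain ⟨q, hq, hqc⟩ := isPreconnected_Ioi.intermediate_value ha hb hcont ⟨hac, hbc⟩
  exact ⟨q, hq, hqc⟩

theorem GoodH.continuousOn_PhiHat2_comp (hh : GoodH h h' h'') {p u : ℝ → ℝ} {s : Set ℝ}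
    (hp : ContinuousOn p s) (hu : ContinuousOn u s) (hp0 : ∀ R ∈ s, 0 < p R)
    (hu0 : ∀ R ∈ s, 0 < u R) : ContinuousOn (fun R => PhiHat2 n κ h' (p R) (u R)) s := by
  have hd : ContinuousOn (fun R => h' (p R * u R ^ (n - 1))) s :=
    hh.continuousOn_deriv.comp (hp.mul (hu.pow _)) fun R hR =>
      mul_pos (hp0 R hR) (pow_pos (hu0 R hR) _)
  have hl : ContinuousOn (fun R => log (u R)) s := hu.log fun R hR => (hu0 R hR).ne'
  exact (hp.mul (hu.pow _)).mul ((hd.add_const κ).add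
    (((hl.const_add _).const_mul _).const_mul _))

theorem pow_mul_PhiHat1_eq_pow_mul_THat {q R u : ℝ} (hR : 0 < R) (hu : 0 < u) :
    R ^ (n - 1) * PhiHat1 n κ h' q (u / R) = u ^ (n - 1) * THat n κ h' q (u / R) := by
  have hv : 0 < u / R := div_pos hu hR
  have h1 : R ^ (n - 1) * (u / R) ^ (n - 1) = u ^ (n - 1) := by
    rw [← mul_pow, mul_div_cancel₀ _ hR.ne']
  have h2 : (u / R) ^ (n - 1) * (q / (u / R)) ^ (n - 1) = q ^ (n - 1) := by
    rw [← mul_pow, mul_div_cancel₀ _ hv.ne']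
  rw [← h1, PhiHat1, THat, ← h2]
  ring

/-- A deformation whose flux agrees almost everywhere with a primitive of its source is
continuously differentiable and solves the equilibrium equation classically. -/
theorem Adm.regular_of_ae_eq (hh : GoodH h h' h'') (hκ : 0 < κ)
    (hadm : Adm lam r r') (hq : ∀ R, 0 < r' R)
    (hQ : ∀ a ∈ Ioc (0 : ℝ) 1, IntegrableOn (radialSource n κ h' r r') (Ioc a 1))
    {C : ℝ} (hC : ∀ᵐ t ∂(volume.restrict (Ioc (0 : ℝ) 1)),
      radialFlux n κ h' r r' t = C - ∫ R in Ioc t 1, radialSource n κ h' r r' R) :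
    ∃ ρ : ℝ → ℝ, ContinuousOn ρ (Ioc 0 1) ∧
      (∀ R ∈ Ioc (0 : ℝ) 1, HasDerivWithinAt r (ρ R) (Ioc 0 1) R) ∧
      (∀ R ∈ Ioc (0 : ℝ) 1, 0 < ρ R) ∧
      ContinuousOn (radialSource n κ h' r ρ) (Ioc 0 1) ∧
      (∀ R ∈ Ioc (0 : ℝ) 1, HasDerivWithinAt (radialFlux n κ h' r ρ)
        (radialSource n κ h' r ρ R) (Ioc 0 1) R) ∧
      ∀ R ∈ Ioc (0 : ℝ) 1,
        radialFlux n κ h' r ρ R = C - ∫ t in Ioc R 1, radialSource n κ h' r r' t := by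
  set H : ℝ → ℝ := fun t => C - ∫ R in Ioc t 1, radialSource n κ h' r r' R with hH
  have hv : ∀ R ∈ Ioc (0 : ℝ) 1, 0 < r R / R := fun R hR => div_pos (hadm.pos hq hR) hR.1
  have hsol : ∀ R, ∃ q, R ∈ Ioc (0 : ℝ) 1 →
      0 < q ∧ R ^ (n - 1) * PhiHat1 n κ h' q (r R / R) = H R := by
    intro R
    by_cases hR : R ∈ Ioc (0 : ℝ) 1
    · obtain ⟨q, hq0, hqe⟩ := hh.exists_PhiHat1_eq (n := n) hκ (hv R hR) (H R / R ^ (n - 1))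
      exact ⟨q, fun _ => ⟨hq0, by rw [hqe, mul_div_cancel₀ _ (pow_pos hR.1 _).ne']⟩⟩
    · exact ⟨0, fun h => absurd h hR⟩
  choose ρ hρ using hsol
  have hρ0 : ∀ R ∈ Ioc (0 : ℝ) 1, 0 < ρ R := fun R hR => (hρ R hR).1
  have hflux : ∀ R ∈ Ioc (0 : ℝ) 1, radialFlux n κ h' r ρ R = H R := fun R hR => (hρ R hR).2
  have hmono : ∀ R ∈ Ioc (0 : ℝ) 1,
      StrictMonoOn (fun q => R ^ (n - 1) * PhiHat1 n κ h' q (r R / R)) (Ioi 0) :=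
    fun R hR a ha b hb hab => mul_lt_mul_of_pos_left
      (hh.strictMonoOn_PhiHat1 hκ (hv R hR) ha hb hab) (pow_pos hR.1 _)
  have hrc : ContinuousOn (fun R => r R / R) (Ioc 0 1) :=
    (hadm.continuousOn.mono Ioc_subset_Icc_self).div continuousOn_id fun R hR => hR.1.ne'
  have hHc : ContinuousOn H (Ioc 0 1) := continuousOn_const.sub (continuousOn_tail_integral_Ioc hQ)
  have hρc : ContinuousOn ρ (Ioc 0 1) :=
    continuousOn_of_strictMonoOn_of_eq
      (G := fun q R => R ^ (n - 1) * PhiHat1 n κ h' q (r R / R))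
      (fun q hq0 => (continuousOn_id.pow _).mul (hh.continuousOn_PhiHat1_comp continuousOn_const hrc
        (fun _ _ => hq0) hv)) hmono hHc hρ0 hflux
  have hae : r' =ᵐ[volume.restrict (Ioc 0 1)] ρ := by
    filter_upwards [hC, ae_restrict_mem measurableSet_Ioc] with R h1 hR
    exact (hmono R hR).injOn (hq R) (hρ0 R hR) (h1.trans (hflux R hR).symm)
  have hQae : radialSource n κ h' r r' =ᵐ[volume.restrict (Ioc 0 1)] radialSource n κ h' r ρ := by
    filter_upwards [hae] with R hR
    simp only [radialSource, hR]
  have hrestrict : ∀ R ∈ Ioc (0 : ℝ) 1, ∀ {f g : ℝ → ℝ}, f =ᵐ[volume.restrict (Ioc 0 1)] g →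
      ∫ t in Ioc R 1, f t = ∫ t in Ioc R 1, g t := fun R hR f g hfg =>
    integral_congr_ae (ae_mono (Measure.restrict_mono (Ioc_subset_Ioc_left hR.1.le) le_rfl) hfg)
  have hQc : ContinuousOn (radialSource n κ h' r ρ) (Ioc 0 1) :=
    (continuousOn_const.mul (continuousOn_id.pow _)).mul
      (hh.continuousOn_PhiHat2_comp hρc hrc hρ0 hv)
  refine ⟨ρ, hρc, fun R hR => ?_, hρ0, hQc, fun R hR => ?_, hflux⟩
  · refine hasDerivWithinAt_of_eq_sub_tail_integral (c := r 1) hρc (fun s hs => ?_) hR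
    rw [← hrestrict s hs hae, hadm.ftc s (Ioc_subset_Icc_self hs),
      hadm.ftc 1 ⟨zero_le_one, le_rfl⟩,
      setIntegral_Ioc_add_Ioc hadm.intg (Ioc_subset_Icc_self hs)]
    ring
  · refine hasDerivWithinAt_of_eq_sub_tail_integral (c := C) hQc (fun s hs => ?_) hR
    rw [hflux s hs, ← hrestrict s hs hQae]

theorem tendsto_THat_zero (hr : ContinuousOn r (Icc 0 1)) (hrpos : ∀ R ∈ Ioc (0 : ℝ) 1, 0 < r R)
    (hr0 : 0 < r 0) {ρ Q : ℝ → ℝ} (hQ : IntegrableOn Q (Ioc 0 1))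
    (hflux : ∀ R ∈ Ioc (0 : ℝ) 1,
      radialFlux n κ h' r ρ R = (∫ t in Ioc 0 1, Q t) - ∫ t in Ioc R 1, Q t) :
    Tendsto (fun R => THat n κ h' (ρ R) (r R / R)) (nhdsWithin 0 (Ioi 0)) (nhds 0) := by
  have hle : nhdsWithin (0 : ℝ) (Ioi 0) ≤ nhdsWithin 0 (Icc 0 1) :=
    nhdsWithin_le_of_mem (mem_of_superset (Ioc_mem_nhdsGT one_pos) Ioc_subset_Icc_self)
  have h0 : (0 : ℝ) ∈ Icc (0 : ℝ) 1 := ⟨le_rfl, zero_le_one⟩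
  have h1 : Tendsto (fun R => (∫ t in Ioc 0 1, Q t) - ∫ t in Ioc R 1, Q t)
      (nhdsWithin 0 (Ioi 0)) (nhds 0) := by
    have := ((continuousOn_tail_integral hQ 0 h0).tendsto.mono_left hle).const_sub
      (∫ t in Ioc 0 1, Q t)
    rwa [sub_self] at this
  have h2 : Tendsto (fun R => r R ^ (n - 1)) (nhdsWithin 0 (Ioi 0)) (nhds (r 0 ^ (n - 1))) :=
    ((hr 0 h0).tendsto.mono_left hle).pow _
  have h3 := h1.div h2 (pow_pos hr0 _).ne'
  rw [zero_div] at h3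
  refine h3.congr' ?_
  filter_upwards [Ioc_mem_nhdsGT one_pos] with R hR
  rw [Pi.div_apply, ← hflux R hR, radialFlux, pow_mul_PhiHat1_eq_pow_mul_THat hR.1 (hrpos R hR),
    mul_div_cancel_left₀ _ (pow_pos (hrpos R hR) _).ne']

theorem Adm.exists_measurable_pos_deriv (hadm : Adm lam r r') :
    ∃ p : ℝ → ℝ, Measurable p ∧ (∀ R, 0 < p R) ∧ r' =ᵐ[volume.restrict (Ioc 0 1)] p := by
  have hm := hadm.intg.aemeasurable
  refine ⟨fun R => if 0 < hm.mk r' R then hm.mk r' R else 1,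
    Measurable.ite (measurableSet_lt measurable_const hm.measurable_mk) hm.measurable_mk
      measurable_const, fun R => ?_, ?_⟩
  · dsimp only
    split_ifs with hR
    exacts [hR, one_pos]
  · filter_upwards [hm.ae_eq_mk, hadm.derivPos] with R h1 h2
    rw [h1] at h2
    simp only [h2, if_true, h1]

end Regularity

/-- a minimizer of `Î` over `𝒜_λ` is `C¹` on `(0,1]` with positive
derivative `ρ`, satisfies the modified equilibrium equation there (with the map
`R ↦ R^{n−1}Φ̂_{,1}` being `C¹`), and if `r(0) > 0` then `T̂(r(R)) → 0` as `R → 0⁺`. -/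
theorem stmt11 (n : ℕ) (hn : 2 ≤ n) (κ : ℝ) (hκ : 0 < κ)
    (h h' h'' : ℝ → ℝ) (hh : GoodH h h' h'')
    (K γ₀ : ℝ) (hK : 0 < K) (hγ₀ : 0 < γ₀)
    (hctrl : ∀ d : ℝ, 0 < d → ∀ c : ℝ, |c - 1| ≤ γ₀ → |d * h' (c * d)| ≤ K * (h d + 1))
    (lam : ℝ) (hlam : 0 < lam) (r r' : ℝ → ℝ) (hadm : Adm lam r r')
    (hmin : ∀ s s' : ℝ → ℝ, Adm lam s s' → IHatE n κ lam h r r' ≤ IHatE n κ lam h s s') :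
    ∃ ρ : ℝ → ℝ, ContinuousOn ρ (Set.Ioc 0 1) ∧
      (∀ R ∈ Set.Ioc (0:ℝ) 1, HasDerivWithinAt r (ρ R) (Set.Ioc 0 1) R) ∧
      (∀ R ∈ Set.Ioc (0:ℝ) 1, 0 < ρ R) ∧
      ContinuousOn (fun R => ((n:ℝ) - 1) * R ^ (n - 2) * PhiHat2 n κ h' (ρ R) (r R / R))
        (Set.Ioc 0 1) ∧
      (∀ R ∈ Set.Ioc (0:ℝ) 1,
        HasDerivWithinAt (fun s => s ^ (n - 1) * PhiHat1 n κ h' (ρ s) (r s / s))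
          (((n:ℝ) - 1) * R ^ (n - 2) * PhiHat2 n κ h' (ρ R) (r R / R)) (Set.Ioc 0 1) R) ∧
      (0 < r 0 →
        Tendsto (fun R => THat n κ h' (ρ R) (r R / R)) (nhdsWithin 0 (Set.Ioi 0)) (nhds 0)) := by
  obtain ⟨p, hpm, hp, hrp⟩ := hadm.exists_measurable_pos_deriv
  have hadmp := hadm.congr_deriv hrp
  have hminp : ∀ s s' : ℝ → ℝ, Adm lam s s' → IHatE n κ lam h r p ≤ IHatE n κ lam h s s' :=
    IHatE_congr_deriv (h := h) (n := n) (κ := κ) (lam := lam) (r := r) hrp ▸ hmin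
  have h_int := hadmp.integrableOn_density hn hκ hh hlam hp hpm hminp
  have hE := hadmp.integrableOn_energyControl hn hκ hh hlam hp hpm h_int
  have hw := hadmp.weakStationary hn hκ hK hγ₀ hh hctrl hp hpm h_int hE hminp
  have hmono := (hadmp.strictMonoOn hp).monotoneOn
  have hrpos : ∀ R ∈ Ioc (0 : ℝ) 1, 0 < r R := fun R hR => hadmp.pos hp hR
  have hQm := hadmp.aemeasurable_radialSource (n := n) (κ := κ) hh hp hpm
  have hQr := hadmp.integrableOn_radialSource_mul hn hκ hK hγ₀ hh hctrl hp hpm hE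
  have hQint : ∀ a, 0 ≤ a → a ≤ 1 → 0 < r a → IntegrableOn (radialSource n κ h' r p) (Ioc a 1) :=
    fun a ha0 ha1 hra => integrableOn_of_mul_mono hrpos hmono hQm hQr ha0 ha1 hra
  obtain ⟨C, hC, hC0⟩ := hw.exists_ae_eq hp hpm hadmp.c0 hrpos hmono
    (hadmp.aemeasurable_radialFlux hh hp hpm) hQm
    (hadmp.integrableOn_radialFlux_mul hn hκ hK hγ₀ hh hctrl hp hpm hE) hQr
  obtain ⟨ρ, hρc, hρr, hρ0, hρQ, hρeq, hflux⟩ := hadmp.regular_of_ae_eq hh hκ hp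
    (fun a ha => hQint a ha.1.le ha.2 (hrpos a ha)) hC
  refine ⟨ρ, hρc, hρr, hρ0, hρQ, hρeq, fun hr0 => ?_⟩
  rw [hC0 hr0] at hflux
  exact tendsto_THat_zero hadmp.continuousOn hrpos hr0 (hQint 0 le_rfl zero_le_one hr0) hflux

end
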